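/- arXiv:1904.07354 — 3 statements merged into one kernel-verified Lean document; each statement's English description precedes it below -/
import Mathlib

section
/- There is a universal constant C > 0 with the following property: for every smooth function f : ℝ × ℝ → ℝ that is 2π-periodic in its second variable, vanishes for s outside [0,1], and satisfies |f| ≤ 1, there exists a twice continuously differentiable function u : ℝ × ℝ → ℝ, 2π-periodic in its second variable, such that ∂²u/∂s² + ∂²u/∂θ² = f on all of ℝ × ℝ, |u(s,θ)| ≤ C for all s ≤ 1 and all θ, and |u(s,θ)| ≤ C s for all s > 1 and all θ. -/
/-!
Expand `f` in a Fourier series in the angle `θ`, with coefficients `c n s`. The mode `n ≠ 0` asks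
for `g'' - n² g = c n`, whose Green's function `-exp (-|n| |s|) / (2 |n|)` has integral `-1 / n²`;
these solutions are bounded and add up to a bounded function. The mode `n = 0` asks for `g'' = c 0`,
solved by the double primitive vanishing for `s ≤ 0`, which grows at most linearly because `c 0` is
supported in `[0, 1]`. Two angular derivatives of `f` give `c n = O(1 / n²)`, so the derivatives
of order at most two of the modes are summable and the Laplacian can be taken term by term.
-/

open Real Set MeasureTheory

section IteratedDerivatives

variable {𝕜 E F G : Type*} [NontriviallyNormedField 𝕜] [NormedAddCommGroup E] [NormedSpace 𝕜 E]
  [NormedAddCommGroup F] [NormedSpace 𝕜 F] [NormedAddCommGroup G] [NormedSpace 𝕜 G]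

theorem contDiff_two_iff_deriv_deriv {g : 𝕜 → F} : ContDiff 𝕜 2 g ↔
    Differentiable 𝕜 g ∧ Differentiable 𝕜 (deriv g) ∧ Continuous (deriv (deriv g)) := by
  rw [← one_add_one_eq_two, contDiff_succ_iff_deriv, contDiff_one_iff_deriv]
  simp

theorem iteratedDeriv_comp_add_smul {k : ℕ} {u : E → F} (hu : ContDiff 𝕜 k u) (x v : E) (t : 𝕜) :
    iteratedDeriv k (fun r : 𝕜 => u (x + r • v)) t =
      iteratedFDeriv 𝕜 k u (x + t • v) fun _ => v := by
  have htranslate : ContDiff 𝕜 k fun y => u (x + y) := hu.comp (contDiff_const.add contDiff_id)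
  change iteratedDeriv k ((fun y => u (x + y)) ∘ ContinuousLinearMap.toSpanSingleton 𝕜 v) t = _
  rw [iteratedDeriv_eq_iteratedFDeriv,
    ContinuousLinearMap.iteratedFDeriv_comp_right _ htranslate _ le_rfl,
    iteratedFDeriv_comp_add_left]
  simp

theorem iteratedDeriv_comp_prodMk_left {k : ℕ} {u : 𝕜 × 𝕜 → F} (hu : ContDiff 𝕜 k u)
    (s θ : 𝕜) :
    iteratedDeriv k (fun r => u (r, θ)) s = iteratedFDeriv 𝕜 k u (s, θ) fun _ => (1, 0) := by
  simpa using iteratedDeriv_comp_add_smul hu (0, θ) (1, 0) s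

theorem iteratedDeriv_comp_prodMk_right {k : ℕ} {u : 𝕜 × 𝕜 → F} (hu : ContDiff 𝕜 k u)
    (s θ : 𝕜) :
    iteratedDeriv k (fun r => u (s, r)) θ = iteratedFDeriv 𝕜 k u (s, θ) fun _ => (0, 1) := by
  simpa using iteratedDeriv_comp_add_smul hu (s, 0) (0, 1) θ

theorem norm_iteratedFDeriv_comp_clm_le {k : ℕ} {a : F → G} (ha : ContDiff 𝕜 k a)
    {L : E →L[𝕜] F} (hL : ‖L‖ ≤ 1) (p : E) :
    ‖iteratedFDeriv 𝕜 k (a ∘ L) p‖ ≤ ‖iteratedFDeriv 𝕜 k a (L p)‖ := by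
  rw [L.iteratedFDeriv_comp_right ha p le_rfl]
  refine (ContinuousMultilinearMap.norm_compContinuousLinearMap_le _ _).trans ?_
  exact mul_le_of_le_one_right (norm_nonneg _)
    (Finset.prod_le_one (fun _ _ => norm_nonneg _) fun _ _ => hL)

theorem norm_iteratedFDeriv_mul_fst_snd_le {A : Type*} [NormedRing A] [NormedAlgebra ℝ A] {k : ℕ}
    {a b : ℝ → A} (ha : ContDiff ℝ k a) (hb : ContDiff ℝ k b) {K : ℝ} {p : ℝ × ℝ}
    (hK : ∀ i j, i + j = k → ‖iteratedDeriv i a p.1‖ * ‖iteratedDeriv j b p.2‖ ≤ K) :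
    ‖iteratedFDeriv ℝ k (fun q : ℝ × ℝ => a q.1 * b q.2) p‖ ≤ 2 ^ k * K := by
  have hterm : ∀ i ∈ Finset.range (k + 1),
      (k.choose i : ℝ) * ‖iteratedFDeriv ℝ i (a ∘ ContinuousLinearMap.fst ℝ ℝ ℝ) p‖ *
        ‖iteratedFDeriv ℝ (k - i) (b ∘ ContinuousLinearMap.snd ℝ ℝ ℝ) p‖ ≤ k.choose i * K := by
    intro i hi
    have hik : i ≤ k := Finset.mem_range_succ_iff.1 hi
    rw [mul_assoc]
    refine mul_le_mul_of_nonneg_left (le_trans ?_ (hK i (k - i) (by omega))) (by positivity)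
    rw [← norm_iteratedFDeriv_eq_norm_iteratedDeriv, ← norm_iteratedFDeriv_eq_norm_iteratedDeriv]
    gcongr
    · exact norm_iteratedFDeriv_comp_clm_le (ha.of_le (mod_cast hik))
        (ContinuousLinearMap.norm_fst_le ℝ ℝ ℝ) p
    · exact norm_iteratedFDeriv_comp_clm_le (hb.of_le (mod_cast k.sub_le i))
        (ContinuousLinearMap.norm_snd_le ℝ ℝ ℝ) p
  calc _ ≤ ∑ i ∈ Finset.range (k + 1), (k.choose i : ℝ) *
          ‖iteratedFDeriv ℝ i (a ∘ ContinuousLinearMap.fst ℝ ℝ ℝ) p‖ *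
          ‖iteratedFDeriv ℝ (k - i) (b ∘ ContinuousLinearMap.snd ℝ ℝ ℝ) p‖ :=
        norm_iteratedFDeriv_mul_le (ha.comp (ContinuousLinearMap.fst ℝ ℝ ℝ).contDiff)
          (hb.comp (ContinuousLinearMap.snd ℝ ℝ ℝ).contDiff) p le_rfl
    _ ≤ ∑ i ∈ Finset.range (k + 1), (k.choose i : ℝ) * K := Finset.sum_le_sum hterm
    _ = 2 ^ k * K := by
        rw [← Finset.sum_mul]
        exact_mod_cast congrArg (fun N : ℕ => (N : ℝ) * K) (Nat.sum_range_choose k)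

end IteratedDerivatives

section CylinderLaplacian

variable {F G : Type*} [NormedAddCommGroup F] [NormedSpace ℝ F] [NormedAddCommGroup G]
  [NormedSpace ℝ G]

/-- The Laplace operator `∂²/∂s² + ∂²/∂θ²` of the flat cylinder, acting on functions of `(s, θ)`. -/
noncomputable def cylinderLaplacian (u : ℝ × ℝ → F) (p : ℝ × ℝ) : F :=
  deriv (deriv fun s => u (s, p.2)) p.1 + deriv (deriv fun θ => u (p.1, θ)) p.2

theorem cylinderLaplacian_eq_iteratedFDeriv {u : ℝ × ℝ → F} (hu : ContDiff ℝ 2 u) (p : ℝ × ℝ) :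
    cylinderLaplacian u p =
      iteratedFDeriv ℝ 2 u p (fun _ => (1, 0)) + iteratedFDeriv ℝ 2 u p fun _ => (0, 1) := by
  rw [← iteratedDeriv_comp_prodMk_left hu, ← iteratedDeriv_comp_prodMk_right hu]
  simp only [iteratedDeriv_succ, iteratedDeriv_zero, cylinderLaplacian]

theorem cylinderLaplacian_add {u v : ℝ × ℝ → F} (hu : ContDiff ℝ 2 u) (hv : ContDiff ℝ 2 v)
    (p : ℝ × ℝ) :
    cylinderLaplacian (u + v) p = cylinderLaplacian u p + cylinderLaplacian v p := by
  rw [cylinderLaplacian_eq_iteratedFDeriv (u := u + v) (hu.add hv),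
    cylinderLaplacian_eq_iteratedFDeriv hu, cylinderLaplacian_eq_iteratedFDeriv hv,
    iteratedFDeriv_add_apply hu.contDiffAt hv.contDiffAt]
  exact add_add_add_comm _ _ _ _

theorem cylinderLaplacian_clm_comp (L : F →L[ℝ] G) {u : ℝ × ℝ → F} (hu : ContDiff ℝ 2 u)
    (p : ℝ × ℝ) : cylinderLaplacian (L ∘ u) p = L (cylinderLaplacian u p) := by
  rw [cylinderLaplacian_eq_iteratedFDeriv (L.contDiff.comp hu),
    cylinderLaplacian_eq_iteratedFDeriv hu, L.iteratedFDeriv_comp_left hu.contDiffAt le_rfl,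
    map_add]
  rfl

theorem cylinderLaplacian_tsum [CompleteSpace F] {ι : Type*} {u : ι → ℝ × ℝ → F} {K : ι → ℝ}
    (hu : ∀ i, ContDiff ℝ 2 (u i)) (hK : Summable K)
    (hbound : ∀ k ≤ 2, ∀ i p, ‖iteratedFDeriv ℝ k (u i) p‖ ≤ K i) (p : ℝ × ℝ) :
    cylinderLaplacian (fun q => ∑' i, u i q) p = ∑' i, cylinderLaplacian (u i) p := by
  have hbound' (k : ℕ) (i : ι) (q : ℝ × ℝ) (hk : (k : ℕ∞) ≤ 2) :
      ‖iteratedFDeriv ℝ k (u i) q‖ ≤ K i := hbound k (mod_cast hk) i q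
  have hsum : Summable fun i => iteratedFDeriv ℝ 2 (u i) p :=
    .of_norm_bounded hK fun i => hbound 2 le_rfl i p
  have heval (v : ℝ × ℝ) : HasSum (fun i => iteratedFDeriv ℝ 2 (u i) p fun _ => v)
      (iteratedFDeriv ℝ 2 (fun q => ∑' i, u i q) p fun _ => v) := by
    rw [iteratedFDeriv_tsum_apply (N := 2) hu (fun _ _ => hK) hbound' le_rfl]
    exact ContinuousMultilinearMap.hasSum_eval hsum.hasSum _
  rw [cylinderLaplacian_eq_iteratedFDeriv (contDiff_tsum (N := 2) hu (fun _ _ => hK) hbound')]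
  simp only [cylinderLaplacian_eq_iteratedFDeriv (hu _)]
  exact ((heval _).add (heval _)).tsum_eq.symm

theorem cylinderLaplacian_mul {A : Type*} [NormedField A] [NormedAlgebra ℝ A] (a b : ℝ → A)
    (p : ℝ × ℝ) :
    cylinderLaplacian (fun q => a q.1 * b q.2) p =
      deriv (deriv a) p.1 * b p.2 + a p.1 * deriv (deriv b) p.2 := by
  simp only [cylinderLaplacian, deriv_mul_const_field', deriv_const_mul_field']

end CylinderLaplacian

section ScreenedPotential

variable {E : Type*} [NormedAddCommGroup E] [NormedSpace ℝ E] {m K : ℝ} {h : ℝ → E}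

/-- The primitive of `h` with exponential damping `m > 0`: the bounded solution
`s ↦ ∫ t ≤ s, exp (-m (s - t)) h t` of `p' = h - m p`, for bounded `h`. -/
noncomputable def dampedPrimitive (m : ℝ) (h : ℝ → E) (s : ℝ) : E :=
  exp (-(m * s)) • ∫ t in Iic s, exp (m * t) • h t

theorem norm_dampedPrimitive_le (hm : 0 < m) (hK : ∀ t, ‖h t‖ ≤ K) (s : ℝ) :
    ‖dampedPrimitive m h s‖ ≤ K / m := by
  have hint : ‖∫ t in Iic s, exp (m * t) • h t‖ ≤ ∫ t in Iic s, exp (m * t) * K := by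
    refine norm_integral_le_of_norm_le ((integrableOn_exp_mul_Iic hm s).mul_const K)
      (.of_forall fun t => ?_)
    rw [norm_smul, norm_eq_abs, abs_exp]
    gcongr
    exact hK t
  calc ‖dampedPrimitive m h s‖
      = exp (-(m * s)) * ‖∫ t in Iic s, exp (m * t) • h t‖ := by
        rw [dampedPrimitive, norm_smul, norm_eq_abs, abs_exp]
    _ ≤ exp (-(m * s)) * (exp (m * s) / m * K) := by
        gcongr
        rwa [integral_mul_const, integral_exp_mul_Iic hm] at hint
    _ = K / m := by
        rw [exp_neg]
        field_simp

theorem integrableOn_exp_mul_smul_Iic (hm : 0 < m) (hh : Continuous h) (hK : ∀ t, ‖h t‖ ≤ K)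
    (s : ℝ) : IntegrableOn (fun t => exp (m * t) • h t) (Iic s) := by
  refine ((integrableOn_exp_mul_Iic hm s).mul_const K).mono'
    (by fun_prop : Continuous fun t => exp (m * t) • h t).aestronglyMeasurable
    (.of_forall fun t => ?_)
  rw [norm_smul, norm_eq_abs, abs_exp]
  gcongr
  exact hK t

theorem hasDerivAt_dampedPrimitive [CompleteSpace E] (hm : 0 < m) (hh : Continuous h)
    (hK : ∀ t, ‖h t‖ ≤ K) (s : ℝ) :
    HasDerivAt (dampedPrimitive m h) (h s - m • dampedPrimitive m h s) s := by
  have hexp : HasDerivAt (fun r => exp (-(m * r))) (exp (-(m * s)) * -m) s := by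
    simpa using ((hasDerivAt_id s).const_mul m).neg.exp
  have hcont : Continuous fun t => exp (m * t) • h t := by fun_prop
  have hint : HasDerivAt (fun r => ∫ t in Iic r, exp (m * t) • h t) (exp (m * s) • h s) s := by
    have hsplit : (fun r => ∫ t in Iic r, exp (m * t) • h t) = fun r =>
        (∫ t in (0 : ℝ)..r, exp (m * t) • h t) + ∫ t in Iic 0, exp (m * t) • h t := by
      funext r
      rw [← intervalIntegral.integral_Iic_sub_Iic (integrableOn_exp_mul_smul_Iic hm hh hK 0)
        (integrableOn_exp_mul_smul_Iic hm hh hK r), sub_add_cancel]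
    rw [hsplit]
    exact (hcont.integral_hasStrictDerivAt 0 s).hasDerivAt.add_const _
  refine (hexp.smul hint).congr_deriv ?_
  rw [smul_smul, ← exp_add, neg_add_cancel, exp_zero, one_smul, dampedPrimitive, smul_smul,
    mul_comm, neg_mul, neg_smul, sub_eq_add_neg]

/-- The bounded solution of `g'' - m² g = h` on the line, for `m > 0` and bounded `h`. It is the
convolution of `h` with `-exp (-m |s|) / (2 m)`, split at `t = s` into two damped primitives. -/
noncomputable def screenedPotential (m : ℝ) (h : ℝ → E) (s : ℝ) : E :=
  -(2 * m)⁻¹ • (dampedPrimitive m h s + dampedPrimitive m (fun t => h (-t)) (-s))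

theorem hasDerivAt_dampedPrimitive_reflect [CompleteSpace E] (hm : 0 < m) (hh : Continuous h)
    (hK : ∀ t, ‖h t‖ ≤ K) (s : ℝ) :
    HasDerivAt (fun r => dampedPrimitive m (fun t => h (-t)) (-r))
      (m • dampedPrimitive m (fun t => h (-t)) (-s) - h s) s := by
  have hreflect := hasDerivAt_dampedPrimitive (h := fun t => h (-t)) hm (by fun_prop)
    (fun t => hK (-t)) (-s)
  refine (hreflect.scomp s (hasDerivAt_neg s)).congr_deriv ?_
  rw [neg_neg, neg_one_smul, neg_sub]

theorem hasDerivAt_screenedPotential [CompleteSpace E] (hm : 0 < m) (hh : Continuous h)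
    (hK : ∀ t, ‖h t‖ ≤ K) (s : ℝ) :
    HasDerivAt (screenedPotential m h)
      ((2⁻¹ : ℝ) • (dampedPrimitive m h s - dampedPrimitive m (fun t => h (-t)) (-s))) s := by
  refine (((hasDerivAt_dampedPrimitive hm hh hK s).add
    (hasDerivAt_dampedPrimitive_reflect hm hh hK s)).const_smul (-(2 * m)⁻¹)).congr_deriv ?_
  match_scalars <;> field_simp
  ring

theorem deriv_screenedPotential [CompleteSpace E] (hm : 0 < m) (hh : Continuous h)
    (hK : ∀ t, ‖h t‖ ≤ K) :
    deriv (screenedPotential m h) = fun s =>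
      (2⁻¹ : ℝ) • (dampedPrimitive m h s - dampedPrimitive m (fun t => h (-t)) (-s)) :=
  funext fun s => (hasDerivAt_screenedPotential hm hh hK s).deriv

theorem hasDerivAt_deriv_screenedPotential [CompleteSpace E] (hm : 0 < m) (hh : Continuous h)
    (hK : ∀ t, ‖h t‖ ≤ K) (s : ℝ) :
    HasDerivAt (deriv (screenedPotential m h)) (m ^ 2 • screenedPotential m h s + h s) s := by
  rw [deriv_screenedPotential hm hh hK]
  refine (((hasDerivAt_dampedPrimitive hm hh hK s).sub
    (hasDerivAt_dampedPrimitive_reflect hm hh hK s)).const_smul (2⁻¹ : ℝ)).congr_deriv ?_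
  rw [screenedPotential]
  match_scalars <;> field_simp
  ring

theorem deriv_deriv_screenedPotential [CompleteSpace E] (hm : 0 < m) (hh : Continuous h)
    (hK : ∀ t, ‖h t‖ ≤ K) :
    deriv (deriv (screenedPotential m h)) = fun s => m ^ 2 • screenedPotential m h s + h s :=
  funext fun s => (hasDerivAt_deriv_screenedPotential hm hh hK s).deriv

theorem contDiff_two_screenedPotential [CompleteSpace E] (hm : 0 < m) (hh : Continuous h)
    (hK : ∀ t, ‖h t‖ ≤ K) : ContDiff ℝ 2 (screenedPotential m h) := by
  have hdiff : Differentiable ℝ (screenedPotential m h) := fun s =>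
    (hasDerivAt_screenedPotential hm hh hK s).differentiableAt
  refine contDiff_two_iff_deriv_deriv.2 ⟨hdiff, fun s =>
    (hasDerivAt_deriv_screenedPotential hm hh hK s).differentiableAt, ?_⟩
  rw [deriv_deriv_screenedPotential hm hh hK]
  exact (hdiff.continuous.const_smul _).add hh

theorem norm_screenedPotential_le (hm : 0 < m) (hK : ∀ t, ‖h t‖ ≤ K) (s : ℝ) :
    ‖screenedPotential m h s‖ ≤ K / m ^ 2 := by
  have hleft := norm_dampedPrimitive_le hm hK s
  have hright := norm_dampedPrimitive_le hm (fun t => hK (-t)) (-s)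
  calc ‖screenedPotential m h s‖
      = (2 * m)⁻¹ *
          ‖dampedPrimitive m h s + dampedPrimitive m (fun t => h (-t)) (-s)‖ := by
        rw [screenedPotential, norm_smul, norm_neg, norm_of_nonneg (by positivity)]
    _ ≤ (2 * m)⁻¹ * (K / m + K / m) := by
        gcongr
        exact norm_add_le_of_le hleft hright
    _ = K / m ^ 2 := by
        field_simp
        ring

theorem norm_deriv_screenedPotential_le [CompleteSpace E] (hm : 0 < m) (hh : Continuous h)
    (hK : ∀ t, ‖h t‖ ≤ K) (s : ℝ) : ‖deriv (screenedPotential m h) s‖ ≤ K / m := by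
  have hleft := norm_dampedPrimitive_le hm hK s
  have hright := norm_dampedPrimitive_le hm (fun t => hK (-t)) (-s)
  rw [deriv_screenedPotential hm hh hK, norm_smul, norm_of_nonneg (by positivity)]
  linarith [norm_sub_le_of_le hleft hright]

theorem norm_deriv_deriv_screenedPotential_le [CompleteSpace E] (hm : 0 < m) (hh : Continuous h)
    (hK : ∀ t, ‖h t‖ ≤ K) (s : ℝ) : ‖deriv (deriv (screenedPotential m h)) s‖ ≤ 2 * K := by
  rw [deriv_deriv_screenedPotential hm hh hK]
  calc ‖m ^ 2 • screenedPotential m h s + h s‖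
      ≤ m ^ 2 * (K / m ^ 2) + K := by
        refine norm_add_le_of_le ?_ (hK s)
        rw [norm_smul, norm_of_nonneg (by positivity)]
        gcongr
        exact norm_screenedPotential_le hm hK s
    _ = 2 * K := by
        field_simp
        ring

theorem norm_iteratedDeriv_screenedPotential_le [CompleteSpace E] (hm : 0 < m)
    (hh : Continuous h) (hK : ∀ t, ‖h t‖ ≤ K) {k : ℕ} (hk : k ≤ 2) (s : ℝ) :
    ‖iteratedDeriv k (screenedPotential m h) s‖ ≤ 2 * K * m ^ k / m ^ 2 := by
  have hK0 : 0 ≤ K := (norm_nonneg _).trans (hK 0)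
  interval_cases k
  · calc ‖iteratedDeriv 0 (screenedPotential m h) s‖ ≤ K / m ^ 2 := by
          simpa only [iteratedDeriv_zero] using norm_screenedPotential_le hm hK s
      _ ≤ 2 * K * m ^ 0 / m ^ 2 := by
          gcongr
          linarith
  · calc ‖iteratedDeriv 1 (screenedPotential m h) s‖ ≤ K / m := by
          simpa only [iteratedDeriv_one] using norm_deriv_screenedPotential_le hm hh hK s
      _ ≤ 2 * (K / m) := le_mul_of_one_le_left (by positivity) one_le_two
      _ = 2 * K * m ^ 1 / m ^ 2 := by field_simp
  · calc ‖iteratedDeriv 2 (screenedPotential m h) s‖ ≤ 2 * K := by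
          simpa only [iteratedDeriv_succ, iteratedDeriv_zero] using
            norm_deriv_deriv_screenedPotential_le hm hh hK s
      _ = 2 * K * m ^ 2 / m ^ 2 := by field_simp

end ScreenedPotential

section DoublePrimitive

variable {E : Type*} [NormedAddCommGroup E] [NormedSpace ℝ E] {K : ℝ} {h : ℝ → E}

theorem norm_intervalIntegral_le_mul_max (hneg : ∀ t < 0, h t = 0) (hK : ∀ t, ‖h t‖ ≤ K)
    (s : ℝ) : ‖∫ t in (0 : ℝ)..s, h t‖ ≤ K * max s 0 := by
  rcases le_total 0 s with hs | hs
  · simpa [abs_of_nonneg hs, hs] using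
      intervalIntegral.norm_integral_le_of_norm_le_const (a := 0) (b := s) fun t _ => hK t
  · have hzero : ∫ t in s..(0 : ℝ), h t = 0 := by
      rw [intervalIntegral.integral_of_le hs, integral_Ioc_eq_integral_Ioo]
      exact setIntegral_eq_zero_of_forall_eq_zero fun t ht => hneg t ht.2
    rw [intervalIntegral.integral_symm, hzero, max_eq_right hs]
    simp

theorem norm_intervalIntegral_le_of_support_Icc (hsupp : ∀ t ∉ Icc (0 : ℝ) 1, h t = 0)
    (hK : ∀ t, ‖h t‖ ≤ K) (s : ℝ) : ‖∫ t in (0 : ℝ)..s, h t‖ ≤ K := by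
  have hK0 : 0 ≤ K := (norm_nonneg _).trans (hK 0)
  have hbound :=
    norm_intervalIntegral_le_mul_max (fun t ht => hsupp t fun h01 => ht.not_ge h01.1) hK
  rcases le_total s 1 with hs | hs
  · exact (hbound s).trans (mul_le_of_le_one_right hK0 (max_le hs zero_le_one))
  · have htail : ∫ t in (0 : ℝ)..s, h t = ∫ t in (0 : ℝ)..1, h t := by
      rw [intervalIntegral.integral_of_le (zero_le_one.trans hs),
        intervalIntegral.integral_of_le zero_le_one]
      refine setIntegral_eq_of_subset_of_forall_sdiff_eq_zero measurableSet_Ioc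
        (Ioc_subset_Ioc_right hs) fun t ht => hsupp t fun h01 => ht.2 ⟨ht.1.1, h01.2⟩
    simpa [htail] using hbound 1

/-- The solution of `g'' = h` with `g 0 = 0` and `g' 0 = 0`. -/
noncomputable def doublePrimitive (h : ℝ → E) (s : ℝ) : E :=
  ∫ x in (0 : ℝ)..s, ∫ t in (0 : ℝ)..x, h t

theorem norm_doublePrimitive_le (hsupp : ∀ t ∉ Icc (0 : ℝ) 1, h t = 0) (hK : ∀ t, ‖h t‖ ≤ K)
    (s : ℝ) : ‖doublePrimitive h s‖ ≤ K * max s 0 := by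
  refine norm_intervalIntegral_le_mul_max (fun x hx => ?_)
    (norm_intervalIntegral_le_of_support_Icc hsupp hK) s
  have hx_bound := norm_intervalIntegral_le_mul_max
    (fun t ht => hsupp t fun h01 => ht.not_ge h01.1) hK x
  rwa [max_eq_right hx.le, mul_zero, norm_le_zero_iff] at hx_bound

variable [CompleteSpace E]

theorem hasDerivAt_doublePrimitive (hh : Continuous h) (s : ℝ) :
    HasDerivAt (doublePrimitive h) (∫ t in (0 : ℝ)..s, h t) s :=
  ((intervalIntegral.differentiable_integral_of_continuous hh).continuous.integral_hasStrictDerivAt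
    0 s).hasDerivAt

theorem deriv_doublePrimitive (hh : Continuous h) :
    deriv (doublePrimitive h) = fun s => ∫ t in (0 : ℝ)..s, h t :=
  funext fun s => (hasDerivAt_doublePrimitive hh s).deriv

theorem deriv_deriv_doublePrimitive (hh : Continuous h) :
    deriv (deriv (doublePrimitive h)) = h := by
  rw [deriv_doublePrimitive hh]
  exact funext fun s => hh.deriv_integral h 0 s

theorem contDiff_two_doublePrimitive (hh : Continuous h) : ContDiff ℝ 2 (doublePrimitive h) := by
  refine contDiff_two_iff_deriv_deriv.2 ⟨fun s =>
    (hasDerivAt_doublePrimitive hh s).differentiableAt, ?_, ?_⟩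
  · rw [deriv_doublePrimitive hh]
    exact intervalIntegral.differentiable_integral_of_continuous hh
  · rwa [deriv_deriv_doublePrimitive hh]

end DoublePrimitive

section FourierCoefficients

theorem norm_fourierCoeffOn_le {E : Type*} [NormedAddCommGroup E] [NormedSpace ℂ E] {a b : ℝ}
    (hab : a < b) {φ : ℝ → E} {K : ℝ} (hK : ∀ x ∈ Icc a b, ‖φ x‖ ≤ K) (n : ℤ) :
    ‖fourierCoeffOn hab φ n‖ ≤ K := by
  have hba : 0 < b - a := sub_pos.2 hab
  have hint : ‖∫ x in a..b, fourier (-n) (x : AddCircle (b - a)) • φ x‖ ≤ K * |b - a| := by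
    refine intervalIntegral.norm_integral_le_of_norm_le_const fun x hx => ?_
    rw [norm_smul, fourier_apply, Circle.norm_coe, one_mul]
    exact hK x (Ioc_subset_Icc_self (uIoc_of_le hab.le ▸ hx))
  rw [fourierCoeffOn_eq_integral, norm_smul, norm_of_nonneg (by positivity), one_div,
    inv_mul_le_iff₀ hba, mul_comm]
  rwa [abs_of_pos hba] at hint

theorem continuous_fourierCoeffOn {X E : Type*} [TopologicalSpace X] [NormedAddCommGroup E]
    [NormedSpace ℂ E] {a b : ℝ} (hab : a < b) {f : X × ℝ → E} (hf : Continuous f) (n : ℤ) :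
    Continuous fun x => fourierCoeffOn hab (fun y => f (x, y)) n := by
  simp only [fourierCoeffOn_eq_integral, fourier_coe_apply]
  refine .const_smul
    (intervalIntegral.continuous_parametric_intervalIntegral_of_continuous' ?_ a b) _
  simp only [Function.uncurry_def]
  fun_prop

theorem hasSum_fourierCoeffOn {T : ℝ} (hT : 0 < T) {φ : ℝ → ℂ} (hφ : Continuous φ)
    (hper : φ.Periodic T) (hsum : Summable (fourierCoeffOn hT φ)) (x : ℝ) :
    HasSum (fun n => fourierCoeffOn hT φ n * fourier n (x : AddCircle T)) (φ x) := by
  have : Fact (0 < T) := ⟨hT⟩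
  let Φ : C(AddCircle T, ℂ) := ⟨hper.lift, hφ.quotient_liftOn' _⟩
  have hcoeff : fourierCoeff Φ = fourierCoeffOn hT φ := by
    funext n
    rw [fourierCoeff_eq_intervalIntegral Φ n 0, fourierCoeffOn_eq_integral]
    simp only [fourier_coe_apply, zero_add, sub_zero]
    rfl
  have hΦ := has_pointwise_sum_fourier_series_of_summable (f := Φ) (hcoeff ▸ hsum) x
  simp only [hcoeff, smul_eq_mul] at hΦ
  exact hΦ

theorem fourierCoeffOn_eq_mul_deriv {a b : ℝ} (hab : a < b) {φ : ℝ → ℂ} (hφ : ContDiff ℝ 1 φ)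
    (hφ_ends : φ b = φ a) {n : ℤ} (hn : n ≠ 0) :
    fourierCoeffOn hab φ n =
      (b - a : ℝ) / (2 * π * Complex.I * n) * fourierCoeffOn hab (deriv φ) n := by
  rw [fourierCoeffOn_of_hasDerivAt hab hn
    (fun x _ => (hφ.differentiable one_ne_zero x).hasDerivAt)
    ((hφ.continuous_deriv le_rfl).intervalIntegrable a b), hφ_ends]
  push_cast
  ring

theorem norm_fourierCoeffOn_le_of_iteratedDeriv {T : ℝ} (hT : 0 < T) {k : ℕ} {φ : ℝ → ℂ}
    (hφ : ContDiff ℝ k φ) (hper : φ.Periodic T) {K : ℝ}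
    (hK : ∀ x ∈ Icc 0 T, ‖iteratedDeriv k φ x‖ ≤ K) {n : ℤ} (hn : n ≠ 0) :
    ‖fourierCoeffOn hT φ n‖ ≤ (T / (2 * π * |(n : ℝ)|)) ^ k * K := by
  induction k generalizing φ with
  | zero => simpa using norm_fourierCoeffOn_le hT (by simpa using hK) n
  | succ k ih =>
    have hper' : (deriv φ).Periodic T := fun x => by
      rw [← deriv_comp_add_const, show (fun y => φ (y + T)) = φ from funext hper]
    have hφ' : ContDiff ℝ k (deriv φ) := ((contDiff_succ_iff_deriv (n := k)).1 (mod_cast hφ)).2.2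
    have hbound := ih hφ' hper' (by simpa only [iteratedDeriv_succ'] using hK)
    have hfactor : ‖((T - 0 : ℝ) : ℂ) / (2 * π * Complex.I * n)‖ = T / (2 * π * |(n : ℝ)|) := by
      simp [abs_of_pos hT, abs_of_pos pi_pos]
    rw [fourierCoeffOn_eq_mul_deriv hT (hφ.of_le (by norm_cast; omega)) (by simpa using hper 0) hn,
      norm_mul, hfactor, pow_succ', mul_assoc (T / _)]
    gcongr

end FourierCoefficients

section AngularCoefficients

/-- The `n`-th Fourier coefficient of `f (s, ·)` over the circle `ℝ / 2πℤ`. -/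
noncomputable def angularCoeff (f : ℝ × ℝ → ℂ) (n : ℤ) (s : ℝ) : ℂ :=
  fourierCoeffOn two_pi_pos (fun θ => f (s, θ)) n

variable {f : ℝ × ℝ → ℂ}

theorem continuous_angularCoeff (hf : Continuous f) (n : ℤ) : Continuous (angularCoeff f n) :=
  continuous_fourierCoeffOn two_pi_pos hf n

theorem norm_angularCoeff_le {K : ℝ} {s : ℝ} (hK : ∀ θ, ‖f (s, θ)‖ ≤ K) (n : ℤ) :
    ‖angularCoeff f n s‖ ≤ K :=
  norm_fourierCoeffOn_le two_pi_pos (fun θ _ => hK θ) n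

theorem angularCoeff_eq_zero {s : ℝ} (hs : ∀ θ, f (s, θ) = 0) (n : ℤ) :
    angularCoeff f n s = 0 :=
  norm_le_zero_iff.1 (norm_angularCoeff_le (fun θ => (norm_eq_zero.2 (hs θ)).le) n)

theorem exists_norm_angularCoeff_le_div_sq (hf : ContDiff ℝ 2 f)
    (hper : ∀ s, Function.Periodic (fun θ => f (s, θ)) (2 * π))
    (hsupp : ∀ s ∉ Icc (0 : ℝ) 1, ∀ θ, f (s, θ) = 0) :
    ∃ M : ℝ, ∀ n ≠ 0, ∀ s, ‖angularCoeff f n s‖ ≤ M / (n : ℝ) ^ 2 := by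
  obtain ⟨M, hM⟩ := (isCompact_Icc.prod isCompact_Icc : IsCompact
    (Icc (0 : ℝ) 1 ×ˢ Icc (0 : ℝ) (2 * π))).exists_bound_of_continuousOn
    (hf.continuous_iteratedFDeriv (m := 2) le_rfl).continuousOn
  have hM0 : 0 ≤ M := (norm_nonneg _).trans (hM (0, 0) (by simp [pi_pos.le]))
  refine ⟨M, fun n hn s => ?_⟩
  by_cases hs : s ∈ Icc (0 : ℝ) 1
  · have hderiv : ∀ θ ∈ Icc 0 (2 * π), ‖iteratedDeriv 2 (fun r => f (s, r)) θ‖ ≤ M := by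
      intro θ hθ
      rw [iteratedDeriv_comp_prodMk_right hf]
      exact ((iteratedFDeriv ℝ 2 f (s, θ)).le_opNorm _).trans (by simpa using hM (s, θ) ⟨hs, hθ⟩)
    calc ‖angularCoeff f n s‖
        ≤ (2 * π / (2 * π * |(n : ℝ)|)) ^ 2 * M :=
          norm_fourierCoeffOn_le_of_iteratedDeriv two_pi_pos
            (hf.comp (contDiff_prodMk_right s)) (hper s) hderiv hn
      _ = M / (n : ℝ) ^ 2 := by
          rw [div_mul_cancel_left₀ two_pi_pos.ne', inv_pow, sq_abs, inv_mul_eq_div]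
  · rw [angularCoeff_eq_zero (hsupp s hs), norm_zero]
    positivity

theorem summable_div_int_sq (M : ℝ) : Summable fun n : ℤ => M / (n : ℝ) ^ 2 := by
  simpa only [mul_one_div] using (summable_one_div_int_pow.2 one_lt_two).mul_left M

theorem hasSum_angularCoeff (hf : Continuous f) {s : ℝ}
    (hper : Function.Periodic (fun θ => f (s, θ)) (2 * π)) {M : ℝ}
    (hM : ∀ n ≠ 0, ‖angularCoeff f n s‖ ≤ M / (n : ℝ) ^ 2) (θ : ℝ) :
    HasSum (fun n => angularCoeff f n s * fourier n (θ : AddCircle (2 * π))) (f (s, θ)) := by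
  refine hasSum_fourierCoeffOn two_pi_pos (by fun_prop) hper ?_ θ
  refine .of_norm_bounded_eventually (summable_div_int_sq M) ?_
  filter_upwards [(finite_singleton (0 : ℤ)).eventually_cofinite_notMem] with n hn using hM n hn

end AngularCoefficients

section FourierMonomials

theorem iteratedDeriv_fourier (T : ℝ) (n : ℤ) (k : ℕ) :
    iteratedDeriv k (fun θ : ℝ => fourier n (θ : AddCircle T)) =
      fun θ : ℝ => (2 * π * Complex.I * n / T) ^ k * fourier n (θ : AddCircle T) := by
  induction k with
  | zero => simp
  | succ k ih =>
    funext θ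
    rw [iteratedDeriv_succ, ih, ((hasDerivAt_fourier T n θ).const_mul _).deriv]
    ring

theorem norm_iteratedDeriv_fourier_two_pi (n : ℤ) (k : ℕ) (θ : ℝ) :
    ‖iteratedDeriv k (fun r : ℝ => fourier n (r : AddCircle (2 * π))) θ‖ = |(n : ℝ)| ^ k := by
  rw [iteratedDeriv_fourier, norm_mul, fourier_apply, Circle.norm_coe, mul_one, norm_pow]
  congr 1
  simp [abs_of_pos pi_pos]

theorem deriv_deriv_fourier_two_pi (n : ℤ) (θ : ℝ) :
    deriv (deriv fun r : ℝ => fourier n (r : AddCircle (2 * π))) θ =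
      -(n : ℂ) ^ 2 * fourier n (θ : AddCircle (2 * π)) := by
  have hpi : (π : ℂ) ≠ 0 := mod_cast pi_ne_zero
  have hsecond := congrFun (iteratedDeriv_fourier (2 * π) n 2) θ
  rw [iteratedDeriv_succ, iteratedDeriv_one] at hsecond
  rw [hsecond]
  congr 1
  push_cast
  field_simp
  rw [Complex.I_sq]
  ring

theorem contDiff_fourier {k : WithTop ℕ∞} (T : ℝ) (n : ℤ) :
    ContDiff ℝ k fun θ : ℝ => fourier n (θ : AddCircle T) := by
  simp only [fourier_coe_apply]
  exact ((contDiff_const.mul Complex.ofRealCLM.contDiff).div_const _).cexp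

end FourierMonomials

section CylinderModes

/-- The function `g s * exp (i n θ)` on the cylinder. -/
noncomputable def cylinderMode (n : ℤ) (g : ℝ → ℂ) (p : ℝ × ℝ) : ℂ :=
  g p.1 * fourier n (p.2 : AddCircle (2 * π))

theorem contDiff_cylinderMode {k : WithTop ℕ∞} {g : ℝ → ℂ} (hg : ContDiff ℝ k g) (n : ℤ) :
    ContDiff ℝ k (cylinderMode n g) :=
  (hg.comp contDiff_fst).mul ((contDiff_fourier (2 * π) n).comp contDiff_snd)

theorem cylinderMode_add_two_pi (n : ℤ) (g : ℝ → ℂ) (s θ : ℝ) :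
    cylinderMode n g (s, θ + 2 * π) = cylinderMode n g (s, θ) := by
  simp only [cylinderMode, AddCircle.coe_add_period]

theorem norm_cylinderMode (n : ℤ) (g : ℝ → ℂ) (p : ℝ × ℝ) : ‖cylinderMode n g p‖ = ‖g p.1‖ := by
  rw [cylinderMode, norm_mul, fourier_apply, Circle.norm_coe, mul_one]

theorem cylinderLaplacian_cylinderMode (n : ℤ) (g : ℝ → ℂ) :
    cylinderLaplacian (cylinderMode n g) =
      cylinderMode n fun s => deriv (deriv g) s - (n : ℂ) ^ 2 * g s := by
  funext p
  refine (cylinderLaplacian_mul g (fun θ => fourier n (θ : AddCircle (2 * π))) p).trans ?_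
  rw [deriv_deriv_fourier_two_pi, cylinderMode]
  ring

variable {n : ℤ} {K : ℝ}

theorem cylinderLaplacian_cylinderMode_screenedPotential {h : ℝ → ℂ} (hn : n ≠ 0)
    (hh : Continuous h) (hK : ∀ s, ‖h s‖ ≤ K) :
    cylinderLaplacian (cylinderMode n (screenedPotential |(n : ℝ)| h)) = cylinderMode n h := by
  have hm : 0 < |(n : ℝ)| := by positivity
  simp only [cylinderLaplacian_cylinderMode, deriv_deriv_screenedPotential hm hh hK, sq_abs,
    Complex.real_smul, Complex.ofReal_pow, Complex.ofReal_intCast, add_sub_cancel_left]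

theorem contDiff_two_cylinderMode_screenedPotential {h : ℝ → ℂ} (hn : n ≠ 0)
    (hh : Continuous h) (hK : ∀ s, ‖h s‖ ≤ K) :
    ContDiff ℝ 2 (cylinderMode n (screenedPotential |(n : ℝ)| h)) :=
  contDiff_cylinderMode
    (contDiff_two_screenedPotential (abs_pos.2 (Int.cast_ne_zero.2 hn)) hh hK) n

theorem norm_iteratedFDeriv_cylinderMode_screenedPotential_le {h : ℝ → ℂ} (hn : n ≠ 0)
    (hh : Continuous h) (hK : ∀ s, ‖h s‖ ≤ K) {k : ℕ} (hk : k ≤ 2) (p : ℝ × ℝ) :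
    ‖iteratedFDeriv ℝ k (cylinderMode n (screenedPotential |(n : ℝ)| h)) p‖ ≤ 8 * K := by
  have hn1 : 1 ≤ |(n : ℝ)| := mod_cast Int.one_le_abs hn
  have hm : 0 < |(n : ℝ)| := one_pos.trans_le hn1
  have hK0 : 0 ≤ K := (norm_nonneg _).trans (hK 0)
  have hfactors : ∀ i j, i + j = k →
      ‖iteratedDeriv i (screenedPotential |(n : ℝ)| h) p.1‖ *
        ‖iteratedDeriv j (fun θ : ℝ => fourier n (θ : AddCircle (2 * π))) p.2‖ ≤ 2 * K := by
    intro i j hij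
    rw [norm_iteratedDeriv_fourier_two_pi]
    calc _ ≤ 2 * K * |(n : ℝ)| ^ i / |(n : ℝ)| ^ 2 * |(n : ℝ)| ^ j := by
          gcongr
          exact norm_iteratedDeriv_screenedPotential_le hm hh hK (by omega) p.1
      _ = 2 * K * (|(n : ℝ)| ^ k / |(n : ℝ)| ^ 2) := by
          rw [← hij, pow_add]
          ring
      _ ≤ 2 * K := mul_le_of_le_one_right (by positivity)
          (div_le_one_of_le₀ (pow_le_pow_right₀ hn1 hk) (by positivity))
  calc _ ≤ 2 ^ k * (2 * K) := norm_iteratedFDeriv_mul_fst_snd_le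
        ((contDiff_two_screenedPotential hm hh hK).of_le (mod_cast hk))
        (contDiff_fourier (2 * π) n) hfactors
    _ ≤ 2 ^ 2 * (2 * K) := by
        gcongr
        exact one_le_two
    _ = 8 * K := by ring

end CylinderModes

section OscillatingPotential

/-- The solution `u` of `Δ u = ∑ n ≠ 0, h n s * exp (i n θ)` on the cylinder obtained by summing
the bounded solutions for the individual modes. -/
noncomputable def oscillatingPotential (h : ℤ → ℝ → ℂ) (p : ℝ × ℝ) : ℂ :=
  ∑' n : {n : ℤ // n ≠ 0}, cylinderMode n (screenedPotential |((n : ℤ) : ℝ)| (h n)) p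

theorem oscillatingPotential_add_two_pi (h : ℤ → ℝ → ℂ) (s θ : ℝ) :
    oscillatingPotential h (s, θ + 2 * π) = oscillatingPotential h (s, θ) := by
  simp only [oscillatingPotential, cylinderMode_add_two_pi]

theorem norm_oscillatingPotential_le {h : ℤ → ℝ → ℂ} {K : ℝ} (hK : ∀ n ≠ 0, ∀ s, ‖h n s‖ ≤ K)
    (p : ℝ × ℝ) :
    ‖oscillatingPotential h p‖ ≤ K * ∑' n : {n : ℤ // n ≠ 0}, 1 / ((n : ℤ) : ℝ) ^ 2 := by
  have hsum : Summable fun n : {n : ℤ // n ≠ 0} => 1 / ((n : ℤ) : ℝ) ^ 2 :=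
    (summable_div_int_sq 1).subtype _
  refine tsum_of_norm_bounded (hsum.hasSum.mul_left K) fun n => ?_
  have hn : ((n : ℤ) : ℝ) ≠ 0 := mod_cast n.2
  rw [norm_cylinderMode, mul_one_div, ← sq_abs]
  exact norm_screenedPotential_le (abs_pos.2 hn) (hK n n.2) p.1

variable {h : ℤ → ℝ → ℂ} {K : {n : ℤ // n ≠ 0} → ℝ}

theorem contDiff_two_oscillatingPotential (hh : ∀ n ≠ 0, Continuous (h n)) (hK : Summable K)
    (hbound : ∀ (n : {n : ℤ // n ≠ 0}) (s : ℝ), ‖h n s‖ ≤ K n) :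
    ContDiff ℝ 2 (oscillatingPotential h) := by
  refine contDiff_tsum (N := 2)
    (fun n : {n : ℤ // n ≠ 0} =>
      contDiff_two_cylinderMode_screenedPotential n.2 (hh n n.2) (hbound n))
    (fun _ _ => hK.mul_left 8) fun k n p hk => ?_
  exact norm_iteratedFDeriv_cylinderMode_screenedPotential_le n.2 (hh n n.2) (hbound n)
    (mod_cast hk) p

theorem cylinderLaplacian_oscillatingPotential (hh : ∀ n ≠ 0, Continuous (h n)) (hK : Summable K)
    (hbound : ∀ (n : {n : ℤ // n ≠ 0}) (s : ℝ), ‖h n s‖ ≤ K n) (p : ℝ × ℝ) :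
    cylinderLaplacian (oscillatingPotential h) p =
      ∑' n : {n : ℤ // n ≠ 0}, cylinderMode n (h n) p := by
  refine (cylinderLaplacian_tsum
    (fun n : {n : ℤ // n ≠ 0} =>
      contDiff_two_cylinderMode_screenedPotential n.2 (hh n n.2) (hbound n)) (hK.mul_left 8)
    (fun k hk n =>
      norm_iteratedFDeriv_cylinderMode_screenedPotential_le n.2 (hh n n.2) (hbound n) hk)
    p).trans ?_
  exact tsum_congr fun n => congrFun
    (cylinderLaplacian_cylinderMode_screenedPotential n.2 (hh n n.2) (hbound n)) p

end OscillatingPotential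

section CylinderPotential

/-- The solution `u` of `Δ u = f` on the cylinder whose zeroth Fourier mode is a double primitive
and whose other modes are bounded. -/
noncomputable def cylinderPotential (f : ℝ × ℝ → ℂ) : ℝ × ℝ → ℂ :=
  cylinderMode 0 (doublePrimitive (angularCoeff f 0)) + oscillatingPotential (angularCoeff f)

variable {f : ℝ × ℝ → ℂ}

theorem cylinderPotential_add_two_pi (f : ℝ × ℝ → ℂ) (s θ : ℝ) :
    cylinderPotential f (s, θ + 2 * π) = cylinderPotential f (s, θ) := by
  simp only [cylinderPotential, Pi.add_apply, cylinderMode_add_two_pi,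
    oscillatingPotential_add_two_pi]

theorem norm_cylinderPotential_le {K : ℝ} (hsupp : ∀ s ∉ Icc (0 : ℝ) 1, ∀ θ, f (s, θ) = 0)
    (hK : ∀ p, ‖f p‖ ≤ K) (p : ℝ × ℝ) :
    ‖cylinderPotential f p‖ ≤
      (1 + ∑' n : {n : ℤ // n ≠ 0}, 1 / ((n : ℤ) : ℝ) ^ 2) * K * max p.1 1 := by
  have hcoeff (n : ℤ) (s : ℝ) : ‖angularCoeff f n s‖ ≤ K :=
    norm_angularCoeff_le (fun θ => hK (s, θ)) n
  have hK0 : 0 ≤ K := (norm_nonneg _).trans (hK 0)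
  have hzero : ‖cylinderMode 0 (doublePrimitive (angularCoeff f 0)) p‖ ≤ K * max p.1 0 := by
    rw [norm_cylinderMode]
    exact norm_doublePrimitive_le (fun s hs => angularCoeff_eq_zero (hsupp s hs) 0) (hcoeff 0) p.1
  set S : ℝ := ∑' n : {n : ℤ // n ≠ 0}, 1 / ((n : ℤ) : ℝ) ^ 2
  have hS0 : 0 ≤ S := tsum_nonneg fun n => by positivity
  calc ‖cylinderPotential f p‖
      ≤ K * max p.1 0 + K * S :=
        norm_add_le_of_le hzero (norm_oscillatingPotential_le (fun n _ => hcoeff n) p)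
    _ ≤ K * max p.1 1 + K * S * max p.1 1 :=
        add_le_add (mul_le_mul_of_nonneg_left (max_le_max_left _ zero_le_one) hK0)
          (le_mul_of_one_le_right (mul_nonneg hK0 hS0) (le_max_right _ _))
    _ = (1 + S) * K * max p.1 1 := by ring

theorem contDiff_two_cylinderPotential (hf : ContDiff ℝ 2 f)
    (hper : ∀ s, Function.Periodic (fun θ => f (s, θ)) (2 * π))
    (hsupp : ∀ s ∉ Icc (0 : ℝ) 1, ∀ θ, f (s, θ) = 0) : ContDiff ℝ 2 (cylinderPotential f) := by
  obtain ⟨M, hM⟩ := exists_norm_angularCoeff_le_div_sq hf hper hsupp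
  have hcoeff (n : ℤ) := continuous_angularCoeff hf.continuous n
  exact (contDiff_cylinderMode (contDiff_two_doublePrimitive (hcoeff 0)) 0).add
    (contDiff_two_oscillatingPotential (fun n _ => hcoeff n) ((summable_div_int_sq M).subtype _)
      fun n => hM n n.2)

theorem cylinderLaplacian_cylinderPotential (hf : ContDiff ℝ 2 f)
    (hper : ∀ s, Function.Periodic (fun θ => f (s, θ)) (2 * π))
    (hsupp : ∀ s ∉ Icc (0 : ℝ) 1, ∀ θ, f (s, θ) = 0) :
    cylinderLaplacian (cylinderPotential f) = f := by
  obtain ⟨M, hM⟩ := exists_norm_angularCoeff_le_div_sq hf hper hsupp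
  have hcoeff (n : ℤ) := continuous_angularCoeff hf.continuous n
  have hsumM : Summable fun n : {n : ℤ // n ≠ 0} => M / ((n : ℤ) : ℝ) ^ 2 :=
    (summable_div_int_sq M).subtype _
  have hM' (n : {n : ℤ // n ≠ 0}) := hM n n.2
  funext p
  have hfourier : HasSum (fun n => cylinderMode n (angularCoeff f n) p) (f p) :=
    hasSum_angularCoeff hf.continuous (hper p.1) (fun n hn => hM n hn p.1) p.2
  have hzero : cylinderLaplacian (cylinderMode 0 (doublePrimitive (angularCoeff f 0))) p =
      cylinderMode 0 (angularCoeff f 0) p := by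
    simp [cylinderLaplacian_cylinderMode, deriv_deriv_doublePrimitive (hcoeff 0)]
  rw [cylinderPotential, cylinderLaplacian_add
    (contDiff_cylinderMode (contDiff_two_doublePrimitive (hcoeff 0)) 0)
    (contDiff_two_oscillatingPotential (fun n _ => hcoeff n) hsumM hM'),
    hzero, cylinderLaplacian_oscillatingPotential (fun n _ => hcoeff n) hsumM hM',
    ← hfourier.tsum_eq, ← tsum_singleton (0 : ℤ) fun n => cylinderMode n (angularCoeff f n) p]
  exact hfourier.summable.tsum_subtype_add_tsum_subtype_compl {0}

end CylinderPotential

theorem poisson_infinite_cylinder_general :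
    ∃ C : ℝ, 0 < C ∧
      ∀ (f : ℝ × ℝ → ℝ) (K : ℝ),
        ContDiff ℝ 2 f →
        (∀ s θ : ℝ, f (s, θ + 2 * π) = f (s, θ)) →
        (∀ s θ : ℝ, s ∉ Icc (0 : ℝ) 1 → f (s, θ) = 0) →
        (∀ s θ : ℝ, |f (s, θ)| ≤ K) →
        ∃ u : ℝ × ℝ → ℝ,
          ContDiff ℝ 2 u ∧
          (∀ s θ : ℝ, u (s, θ + 2 * π) = u (s, θ)) ∧
          (∀ s θ : ℝ,
            deriv (fun s' => deriv (fun s'' => u (s'', θ)) s') s +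
              deriv (fun θ' => deriv (fun θ'' => u (s, θ'')) θ') θ = f (s, θ)) ∧
          (∀ s θ : ℝ, s ≤ 1 → |u (s, θ)| ≤ C * K) ∧
          (∀ s θ : ℝ, 1 < s → |u (s, θ)| ≤ C * K * s) := by
  refine ⟨1 + ∑' n : {n : ℤ // n ≠ 0}, 1 / ((n : ℤ) : ℝ) ^ 2,
    add_pos_of_pos_of_nonneg one_pos (tsum_nonneg fun n => by positivity),
    fun f K hf hper hsupp hK => ?_⟩
  have hf' : ContDiff ℝ 2 (Complex.ofReal ∘ f) := Complex.ofRealCLM.contDiff.comp hf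
  have hper' (s : ℝ) : Function.Periodic (fun θ => (f (s, θ) : ℂ)) (2 * π) :=
    fun θ => congrArg Complex.ofReal (hper s θ)
  have hsupp' : ∀ s ∉ Icc (0 : ℝ) 1, ∀ θ, (f (s, θ) : ℂ) = 0 :=
    fun s hs θ => congrArg Complex.ofReal (hsupp s θ hs)
  have hK' (p : ℝ × ℝ) : ‖(f p : ℂ)‖ ≤ K := (Complex.norm_real _).trans_le (hK p.1 p.2)
  have hsmooth := contDiff_two_cylinderPotential hf' hper' hsupp'
  have hgrowth (s θ : ℝ) := (Complex.abs_re_le_norm (cylinderPotential _ (s, θ))).trans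
    (norm_cylinderPotential_le (f := Complex.ofReal ∘ f) hsupp' hK' (s, θ))
  refine ⟨Complex.reCLM ∘ cylinderPotential (Complex.ofReal ∘ f),
    Complex.reCLM.contDiff.comp hsmooth,
    fun s θ => congrArg Complex.re (cylinderPotential_add_two_pi _ s θ), fun s θ => ?_,
    fun s θ hs => ?_, fun s θ hs => ?_⟩
  · refine (cylinderLaplacian_clm_comp Complex.reCLM hsmooth (s, θ)).trans ?_
    rw [cylinderLaplacian_cylinderPotential hf' hper' hsupp']
    rfl
  · simpa [max_eq_right hs] using hgrowth s θ
  · simpa [max_eq_left hs.le] using hgrowth s θ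

/-- Poisson equation on the infinite cylinder: for smooth `2π`-periodic-in-`θ` data `f`
supported in `{0 ≤ s ≤ 1}` with `|f| ≤ 1`, there is a solution `u` of
`∂²u/∂s² + ∂²u/∂θ² = f` with `|u| ≤ C` for `s ≤ 1` and `|u| ≤ C s` for `s > 1`,
with `C` a universal constant. -/
theorem poisson_infinite_cylinder :
    ∃ C : ℝ, 0 < C ∧
      ∀ f : ℝ × ℝ → ℝ,
        ContDiff ℝ (⊤ : ℕ∞) f →
        (∀ s θ : ℝ, f (s, θ + 2 * Real.pi) = f (s, θ)) →
        (∀ s θ : ℝ, s ∉ Set.Icc (0 : ℝ) 1 → f (s, θ) = 0) →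
        (∀ s θ : ℝ, |f (s, θ)| ≤ 1) →
        ∃ u : ℝ × ℝ → ℝ,
          ContDiff ℝ 2 u ∧
          (∀ s θ : ℝ, u (s, θ + 2 * Real.pi) = u (s, θ)) ∧
          (∀ s θ : ℝ,
            deriv (fun s' => deriv (fun s'' => u (s'', θ)) s') s +
              deriv (fun θ' => deriv (fun θ'' => u (s, θ'')) θ') θ = f (s, θ)) ∧
          (∀ s θ : ℝ, s ≤ 1 → |u (s, θ)| ≤ C) ∧
          (∀ s θ : ℝ, 1 < s → |u (s, θ)| ≤ C * s) := by
  obtain ⟨C, hC, hsolve⟩ := poisson_infinite_cylinder_general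
  exact ⟨C, hC, fun f hf => by simpa using hsolve f 1 (contDiff_infty.1 hf 2)⟩
end

section
/- Let k be a nonnegative integer. There exists a constant C > 0 depending only on k (and not on M, ε or u) with the following property. Let M ≥ 1, ε > 0, and let u : ℝ × ℝ → ℝ be 2π-periodic in its second variable, twice continuously differentiable on [-M,M] × ℝ, harmonic there (∂²u/∂s² + ∂²u/∂θ² = 0), with |u| ≤ ε on [-M,M] × ℝ. Let a₀, b₀ and aₙ, bₙ, cₙ, dₙ (1 ≤ n ≤ k) be the real numbers satisfying, for all s ∈ [-M,M]: (1/2π) ∫₀^{2π} u(s,θ) dθ = a₀ + b₀ s, (1/π) ∫₀^{2π} u(s,θ) cos(nθ) dθ = aₙ e^{ns} + cₙ e^{-ns}, and (1/π) ∫₀^{2π} u(s,θ) sin(nθ) dθ = bₙ e^{ns} + dₙ e^{-ns}. Define P_k(s,θ) = a₀ + b₀ s + Σ_{n=1}^{k} (aₙ e^{ns} cos nθ + bₙ e^{ns} sin nθ + cₙ e^{-ns} cos nθ + dₙ e^{-ns} sin nθ). Then |u(s,θ) - P_k(s,θ)| ≤ C ε e^{-(k+1)M} e^{(k+1)|s|}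 for all (s,θ) ∈ [-M,M] × ℝ. -/
/-!
Multiplying `∂²u/∂s² + ∂²u/∂θ² = 0` by `e^{-inθ}` and integrating by parts twice over a period shows
that the `n`-th Fourier coefficient `g` of `u (s, ·)` satisfies `g'' = n² g`. For every `r < M` such
a `g` is recovered from its values at `± r` by
`sinh (2nr) g(s) = sinh (n(r+s)) g(r) + sinh (n(r-s)) g(-r)`, and since `‖g‖ ≤ ε`, letting `r → M`
gives `‖g(s)‖ ≤ ε cosh (ns) / cosh (nM) ≤ 2 ε q ^ |n|`, where `q = e^{-(M-|s|)}`.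

If `q ≤ 1/2`, the frequencies `|n| > k` contribute a geometric tail bounded by a multiple of
`q ^ (k+1)`. If `q > 1/2`, then `(2q) ^ (k+1) ≥ 1`, so it is enough to bound `u` and each of the
`2k+1` terms of the truncation separately.
-/

open Set Filter Topology MeasureTheory

section HyperbolicODE

variable {E : Type*} [NormedAddCommGroup E] [NormedSpace ℝ E] {g g' : ℝ → E} {l M B s : ℝ}

lemma exists_eq_cosh_smul_add_sinh_smul {S : Set ℝ} (hS : IsOpen S) (hS' : IsPreconnected S)
    (hl : l ≠ 0) (hg : ∀ s ∈ S, HasDerivAt g (g' s) s)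
    (hg' : ∀ s ∈ S, HasDerivAt g' (l ^ 2 • g s) s) :
    ∃ x y : E, ∀ s ∈ S, g s = Real.cosh (l * s) • x + Real.sinh (l * s) • y := by
  have hcosh (s : ℝ) : HasDerivAt (fun s => Real.cosh (l * s)) (Real.sinh (l * s) * l) s := by
    simpa using ((hasDerivAt_id s).const_mul l).cosh
  have hsinh (s : ℝ) : HasDerivAt (fun s => Real.sinh (l * s)) (Real.cosh (l * s) * l) s := by
    simpa using ((hasDerivAt_id s).const_mul l).sinh
  -- The Wronskians of `g` with `sinh (l * s)` and `cosh (l * s)` are constant.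
  have hx (s) (hs : s ∈ S) : HasDerivAt
      (fun s => Real.cosh (l * s) • l • g s - Real.sinh (l * s) • g' s) 0 s := by
    convert! ((hcosh s).smul ((hg s hs).fun_const_smul l)).sub ((hsinh s).smul (hg' s hs)) using 1
    module
  have hy (s) (hs : s ∈ S) : HasDerivAt
      (fun s => Real.cosh (l * s) • g' s - Real.sinh (l * s) • l • g s) 0 s := by
    convert! ((hcosh s).smul (hg' s hs)).sub ((hsinh s).smul ((hg s hs).fun_const_smul l)) using 1
    module
  obtain ⟨x, hx⟩ := hS.exists_is_const_of_deriv_eq_zero hS'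
    (fun s hs => (hx s hs).differentiableAt.differentiableWithinAt) fun s hs => (hx s hs).deriv
  obtain ⟨y, hy⟩ := hS.exists_is_const_of_deriv_eq_zero hS'
    (fun s hs => (hy s hs).differentiableAt.differentiableWithinAt) fun s hs => (hy s hs).deriv
  refine ⟨l⁻¹ • x, l⁻¹ • y, fun s hs => ?_⟩
  rw [← hx s hs, ← hy s hs]
  match_scalars
  · field_simp
    exact (Real.cosh_sq_sub_sinh_sq _).symm
  · ring

lemma sinh_two_mul_smul_eq_of_hasDerivAt (hl : l ≠ 0)
    (hg : ∀ s ∈ Ioo (-M) M, HasDerivAt g (g' s) s)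
    (hg' : ∀ s ∈ Ioo (-M) M, HasDerivAt g' (l ^ 2 • g s) s) (hs : s ∈ Ioo (-M) M)
    {r : ℝ} (hr : r ∈ Ioo (-M) M) :
    Real.sinh (2 * (l * r)) • g s =
      Real.sinh (l * (r + s)) • g r + Real.sinh (l * (r - s)) • g (-r) := by
  obtain ⟨x, y, hxy⟩ := exists_eq_cosh_smul_add_sinh_smul isOpen_Ioo isPreconnected_Ioo hl hg hg'
  rw [hxy s hs, hxy r hr, hxy (-r) ⟨neg_lt_neg hr.2, neg_lt.1 hr.1⟩, mul_neg, Real.cosh_neg,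
    Real.sinh_neg, mul_add, mul_sub, Real.sinh_add, Real.sinh_sub, Real.sinh_two_mul]
  module

lemma cosh_mul_norm_le_of_hasDerivAt (hl : 0 < l)
    (hg : ∀ s ∈ Ioo (-M) M, HasDerivAt g (g' s) s)
    (hg' : ∀ s ∈ Ioo (-M) M, HasDerivAt g' (l ^ 2 • g s) s)
    (hB : ∀ s ∈ Ioo (-M) M, ‖g s‖ ≤ B) (hs : s ∈ Ioo (-M) M) :
    Real.cosh (l * M) * ‖g s‖ ≤ B * Real.cosh (l * s) := by
  have hinterior (r : ℝ) (hr : r ∈ Ioo |s| M) :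
      Real.cosh (l * r) * ‖g s‖ ≤ B * Real.cosh (l * s) := by
    obtain ⟨hneg, hpos⟩ := abs_lt.1 hr.1
    have hr0 : 0 < r := (abs_nonneg s).trans_lt hr.1
    have hrM : r ∈ Ioo (-M) M := ⟨by linarith [hr.2], hr.2⟩
    have hsinh {t : ℝ} (ht : 0 < t) : 0 < Real.sinh (l * t) := Real.sinh_pos_iff.2 (mul_pos hl ht)
    refine le_of_mul_le_mul_left ?_ (mul_pos two_pos (hsinh hr0))
    calc
      2 * Real.sinh (l * r) * (Real.cosh (l * r) * ‖g s‖)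
        = ‖Real.sinh (2 * (l * r)) • g s‖ := by
          rw [norm_smul, Real.sinh_two_mul, Real.norm_of_nonneg]
          · ring
          · have := hsinh hr0
            positivity
      _ ≤ Real.sinh (l * (r + s)) * ‖g r‖ + Real.sinh (l * (r - s)) * ‖g (-r)‖ := by
          rw [sinh_two_mul_smul_eq_of_hasDerivAt hl.ne' hg hg' hs hrM]
          refine (norm_add_le _ _).trans_eq ?_
          rw [norm_smul, norm_smul, Real.norm_of_nonneg (hsinh (by linarith)).le,
            Real.norm_of_nonneg (hsinh (by linarith)).le]
      _ ≤ Real.sinh (l * (r + s)) * B + Real.sinh (l * (r - s)) * B := by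
          have := hsinh (show 0 < r + s by linarith)
          have := hsinh (show 0 < r - s by linarith)
          gcongr
          · exact hB r hrM
          · exact hB (-r) ⟨neg_lt_neg hr.2, by linarith [hr.2]⟩
      _ = 2 * Real.sinh (l * r) * (B * Real.cosh (l * s)) := by
          rw [mul_add, mul_sub, Real.sinh_add, Real.sinh_sub]
          ring
  have hlim : Tendsto (fun r => Real.cosh (l * r) * ‖g s‖) (𝓝[<] M)
      (𝓝 (Real.cosh (l * M) * ‖g s‖)) :=
    (Continuous.tendsto (by fun_prop) M).mono_left nhdsWithin_le_nhds
  exact le_of_tendsto hlim <|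
    mem_of_superset (Ioo_mem_nhdsLT (abs_lt.2 hs)) hinterior

lemma norm_le_exp_of_hasDerivAt (hl : 0 < l)
    (hg : ∀ s ∈ Ioo (-M) M, HasDerivAt g (g' s) s)
    (hg' : ∀ s ∈ Ioo (-M) M, HasDerivAt g' (l ^ 2 • g s) s)
    (hB : ∀ s ∈ Ioo (-M) M, ‖g s‖ ≤ B) (hs : s ∈ Ioo (-M) M) :
    ‖g s‖ ≤ 2 * B * Real.exp (-(l * (M - |s|))) := by
  have hB0 : 0 ≤ B := (norm_nonneg _).trans (hB s hs)
  have hM : Real.exp (l * M) ≤ 2 * Real.cosh (l * M) := by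
    rw [Real.cosh_eq]
    linarith [Real.exp_pos (-(l * M))]
  have hs' : Real.cosh (l * s) ≤ Real.exp (l * |s|) := by
    rw [← Real.cosh_abs, abs_mul, abs_of_pos hl, ← Real.cosh_add_sinh]
    exact le_add_of_nonneg_right (Real.sinh_nonneg_iff.2 (by positivity))
  calc
    ‖g s‖ = Real.exp (-(l * M)) * (Real.exp (l * M) * ‖g s‖) := by
      rw [← mul_assoc, ← Real.exp_add]
      simp
    _ ≤ Real.exp (-(l * M)) * (2 * (Real.cosh (l * M) * ‖g s‖)) := by
      rw [← mul_assoc 2]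
      gcongr
    _ ≤ Real.exp (-(l * M)) * (2 * (B * Real.exp (l * |s|))) := by
      grw [cosh_mul_norm_le_of_hasDerivAt hl hg hg' hB hs, hs']
    _ = 2 * B * Real.exp (-(l * (M - |s|))) := by
      rw [show -(l * (M - |s|)) = -(l * M) + l * |s| by ring, Real.exp_add]
      ring

end HyperbolicODE

section PartialDerivatives

variable {𝕜 E : Type*} [NontriviallyNormedField 𝕜] [NormedAddCommGroup E] [NormedSpace 𝕜 E]
  {f : 𝕜 × 𝕜 → E} {p : 𝕜 × 𝕜} {Ω : Set (𝕜 × 𝕜)} {m n : WithTop ℕ∞}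

/-- The partial derivative of `f` in the first variable, as the `deriv` of a slice, so that
iterating it gives the iterated `deriv`s of the Laplace equation. -/
noncomputable def derivFst (f : 𝕜 × 𝕜 → E) (p : 𝕜 × 𝕜) : E := deriv (fun s => f (s, p.2)) p.1

/-- The partial derivative of `f` in the second variable, encoded like `derivFst`. -/
noncomputable def derivSnd (f : 𝕜 × 𝕜 → E) (p : 𝕜 × 𝕜) : E := deriv (fun θ => f (p.1, θ)) p.2

lemma hasDerivAt_slice_fst (hf : DifferentiableAt 𝕜 f p) :
    HasDerivAt (fun s => f (s, p.2)) (fderiv 𝕜 f p (1, 0)) p.1 :=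
  hf.hasFDerivAt.comp_hasDerivAt (f := fun s => (s, p.2)) p.1
    ((hasDerivAt_id p.1).prodMk (hasDerivAt_const p.1 p.2))

lemma hasDerivAt_slice_snd (hf : DifferentiableAt 𝕜 f p) :
    HasDerivAt (fun θ => f (p.1, θ)) (fderiv 𝕜 f p (0, 1)) p.2 :=
  hf.hasFDerivAt.comp_hasDerivAt (f := fun θ => (p.1, θ)) p.2
    ((hasDerivAt_const p.2 p.1).prodMk (hasDerivAt_id p.2))

lemma hasDerivAt_derivFst (hf : DifferentiableAt 𝕜 f p) :
    HasDerivAt (fun s => f (s, p.2)) (derivFst f p) p.1 :=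
  (hasDerivAt_slice_fst hf).differentiableAt.hasDerivAt

lemma hasDerivAt_derivSnd (hf : DifferentiableAt 𝕜 f p) :
    HasDerivAt (fun θ => f (p.1, θ)) (derivSnd f p) p.2 :=
  (hasDerivAt_slice_snd hf).differentiableAt.hasDerivAt

lemma contDiffOn_derivFst (hΩ : IsOpen Ω) (hf : ContDiffOn 𝕜 n f Ω) (hmn : m + 1 ≤ n) :
    ContDiffOn 𝕜 m (derivFst f) Ω :=
  ((hf.fderiv_of_isOpen hΩ hmn).clm_apply contDiffOn_const).congr fun _ hp =>
    (hasDerivAt_slice_fst ((hf.contDiffAt (hΩ.mem_nhds hp)).differentiableAt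
      (zero_lt_one.trans_le (le_add_self.trans hmn)).ne')).deriv

lemma contDiffOn_derivSnd (hΩ : IsOpen Ω) (hf : ContDiffOn 𝕜 n f Ω) (hmn : m + 1 ≤ n) :
    ContDiffOn 𝕜 m (derivSnd f) Ω :=
  ((hf.fderiv_of_isOpen hΩ hmn).clm_apply contDiffOn_const).congr fun _ hp =>
    (hasDerivAt_slice_snd ((hf.contDiffAt (hΩ.mem_nhds hp)).differentiableAt
      (zero_lt_one.trans_le (le_add_self.trans hmn)).ne')).deriv

end PartialDerivatives

section Modes

variable {E : Type*} [NormedAddCommGroup E] [NormedSpace ℝ E]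

lemma periodic_of_hasDerivAt {f f' : ℝ → E} {T : ℝ} (hf : Function.Periodic f T)
    (hf' : ∀ x, HasDerivAt f (f' x) x) : Function.Periodic f' T := fun x => by
  have hshift := (hf' (x + T)).comp_add_const x T
  rw [funext hf] at hshift
  exact hshift.unique (hf' x)

lemma integral_deriv_deriv_smul_eq_of_periodic [CompleteSpace E] {f f' f'' : ℝ → ℝ}
    {φ φ' φ'' : ℝ → E} {T : ℝ}
    (hf : ∀ x, HasDerivAt f (f' x) x) (hf' : ∀ x, HasDerivAt f' (f'' x) x)
    (hφ : ∀ x, HasDerivAt φ (φ' x) x) (hφ' : ∀ x, HasDerivAt φ' (φ'' x) x)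
    (hf'' : Continuous f'') (hφ'' : Continuous φ'')
    (hfT : Function.Periodic f T) (hφT : Function.Periodic φ T) (a : ℝ) :
    ∫ x in a..(a + T), f'' x • φ x = ∫ x in a..(a + T), f x • φ'' x := by
  have hf'c : Continuous f' := continuous_iff_continuousAt.2 fun x => (hf' x).continuousAt
  have hφ'c : Continuous φ' := continuous_iff_continuousAt.2 fun x => (hφ' x).continuousAt
  have h₁ := intervalIntegral.integral_smul_deriv_eq_deriv_smul (a := a) (b := a + T)
    (fun x _ => hf' x) (fun x _ => hφ x) (hf''.intervalIntegrable _ _)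
    (hφ'c.intervalIntegrable _ _)
  have h₂ := intervalIntegral.integral_smul_deriv_eq_deriv_smul (a := a) (b := a + T)
    (fun x _ => hf x) (fun x _ => hφ' x) (hf'c.intervalIntegrable _ _)
    (hφ''.intervalIntegrable _ _)
  rw [periodic_of_hasDerivAt hfT hf, hφT, sub_self, zero_sub] at h₁
  rw [periodic_of_hasDerivAt hφT hφ, hfT, sub_self, zero_sub] at h₂
  rw [h₂, h₁, neg_neg]

lemma continuous_slice {X Y Z : Type*} [TopologicalSpace X] [TopologicalSpace Y]
    [TopologicalSpace Z] {f : X × Y → Z} {S : Set X}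
    (hf : ContinuousOn f (S ×ˢ univ)) {s : X} (hs : s ∈ S) : Continuous fun θ => f (s, θ) :=
  hf.comp_continuous (by fun_prop) fun θ => ⟨hs, mem_univ θ⟩

variable {S : Set ℝ} {f u : ℝ × ℝ → ℝ} {φ φ' : ℝ → E} {s : ℝ}

lemma hasDerivAt_integral_smul_of_contDiffOn (hS : IsOpen S)
    (hf : ContDiffOn ℝ 1 f (S ×ˢ univ)) (hφ : Continuous φ) (hs : s ∈ S) (a b : ℝ) :
    HasDerivAt (fun s => ∫ θ in a..b, f (s, θ) • φ θ)
      (∫ θ in a..b, derivFst f (s, θ) • φ θ) s := by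
  have hΩ : IsOpen (S ×ˢ (univ : Set ℝ)) := hS.prod isOpen_univ
  have hf' : ContinuousOn (derivFst f) (S ×ˢ univ) :=
    (contDiffOn_derivFst (m := 0) hΩ hf le_rfl).continuousOn
  obtain ⟨K, hK, hsK, hKS⟩ := exists_compact_subset hS hs
  have hf'φ : ContinuousOn (fun p : ℝ × ℝ => derivFst f p • φ p.2) (K ×ˢ uIcc a b) :=
    (hf'.mono (prod_mono hKS (subset_univ _))).smul (by fun_prop)
  obtain ⟨B, hB⟩ := (hK.prod isCompact_uIcc).exists_bound_of_continuousOn hf'φ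
  refine (intervalIntegral.hasDerivAt_integral_of_dominated_loc_of_deriv_le
    (F := fun s θ => f (s, θ) • φ θ) (F' := fun s θ => derivFst f (s, θ) • φ θ)
    (bound := fun _ => B) (mem_interior_iff_mem_nhds.1 hsK) ?_ ?_ ?_ ?_ ?_ ?_).2
  · filter_upwards [hS.mem_nhds hs] with t ht
    exact ((continuous_slice hf.continuousOn ht).smul hφ).aestronglyMeasurable
  · exact ((continuous_slice hf.continuousOn hs).smul hφ).intervalIntegrable _ _
  · exact ((continuous_slice hf' hs).smul hφ).aestronglyMeasurable
  · exact .of_forall fun θ hθ t ht => hB (t, θ) ⟨ht, uIoc_subset_uIcc hθ⟩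
  · exact intervalIntegrable_const
  · refine .of_forall fun θ _ t ht => ?_
    have hft := hf.contDiffAt (hΩ.mem_nhds (x := (t, θ)) ⟨hKS ht, mem_univ θ⟩)
    exact (hasDerivAt_derivFst (hft.differentiableAt one_ne_zero)).smul_const (φ θ)

lemma integral_derivFst_derivFst_smul_of_harmonic [CompleteSpace E] (hS : IsOpen S)
    (hu : ContDiffOn ℝ 2 u (S ×ˢ univ)) {T l : ℝ} (hs : s ∈ S)
    (hharm : ∀ θ, derivFst (derivFst u) (s, θ) + derivSnd (derivSnd u) (s, θ) = 0)
    (huT : Function.Periodic (fun θ => u (s, θ)) T)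
    (hφ : ∀ θ, HasDerivAt φ (φ' θ) θ) (hφ' : ∀ θ, HasDerivAt φ' (-l ^ 2 • φ θ) θ)
    (hφT : Function.Periodic φ T) :
    ∫ θ in 0..T, derivFst (derivFst u) (s, θ) • φ θ = l ^ 2 • ∫ θ in 0..T, u (s, θ) • φ θ := by
  have hΩ : IsOpen (S ×ˢ (univ : Set ℝ)) := hS.prod isOpen_univ
  have hmem (θ : ℝ) : S ×ˢ univ ∈ 𝓝 (s, θ) := hΩ.mem_nhds ⟨hs, mem_univ θ⟩
  have hu₁ : ContDiffOn ℝ 1 (derivSnd u) (S ×ˢ univ) := contDiffOn_derivSnd hΩ hu le_rfl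
  have hu₂ : ContinuousOn (derivSnd (derivSnd u)) (S ×ˢ univ) :=
    (contDiffOn_derivSnd (m := 0) hΩ hu₁ le_rfl).continuousOn
  have hφc : Continuous φ := continuous_iff_continuousAt.2 fun θ => (hφ θ).continuousAt
  have hgreen := integral_deriv_deriv_smul_eq_of_periodic
    (fun θ => hasDerivAt_derivSnd ((hu.contDiffAt (hmem θ)).differentiableAt two_ne_zero))
    (fun θ => hasDerivAt_derivSnd ((hu₁.contDiffAt (hmem θ)).differentiableAt one_ne_zero))
    hφ hφ' (continuous_slice hu₂ hs) (by fun_prop) huT hφT 0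
  calc
    _ = -∫ θ in 0..T, derivSnd (derivSnd u) (s, θ) • φ θ := by
      rw [← intervalIntegral.integral_neg]
      simp only [eq_neg_of_add_eq_zero_left (hharm _), neg_smul]
    _ = -∫ θ in 0..T, u (s, θ) • -l ^ 2 • φ θ := by
      rw [zero_add] at hgreen
      rw [hgreen]
    _ = l ^ 2 • ∫ θ in 0..T, u (s, θ) • φ θ := by
      simp_rw [smul_comm (u _) (-l ^ 2), intervalIntegral.integral_smul, neg_smul, neg_neg]

lemma norm_integral_smul_le_of_harmonic [CompleteSpace E] {M B T l : ℝ}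
    (hu : ContDiffOn ℝ 2 u (Ioo (-M) M ×ˢ univ))
    (hharm : ∀ s ∈ Ioo (-M) M, ∀ θ,
      derivFst (derivFst u) (s, θ) + derivSnd (derivSnd u) (s, θ) = 0)
    (huT : ∀ s ∈ Ioo (-M) M, Function.Periodic (fun θ => u (s, θ)) T) (hl : 0 < l)
    (hφ : ∀ θ, HasDerivAt φ (φ' θ) θ) (hφ' : ∀ θ, HasDerivAt φ' (-l ^ 2 • φ θ) θ)
    (hφT : Function.Periodic φ T)
    (hB : ∀ s ∈ Ioo (-M) M, ‖∫ θ in 0..T, u (s, θ) • φ θ‖ ≤ B) (hs : s ∈ Ioo (-M) M) :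
    ‖∫ θ in 0..T, u (s, θ) • φ θ‖ ≤ 2 * B * Real.exp (-(l * (M - |s|))) := by
  have hφc : Continuous φ := continuous_iff_continuousAt.2 fun θ => (hφ θ).continuousAt
  have hu₁ : ContDiffOn ℝ 1 (derivFst u) (Ioo (-M) M ×ˢ univ) :=
    contDiffOn_derivFst (isOpen_Ioo.prod isOpen_univ) hu le_rfl
  refine norm_le_exp_of_hasDerivAt hl
    (fun s hs => hasDerivAt_integral_smul_of_contDiffOn isOpen_Ioo (hu.of_le one_le_two) hφc hs 0 T)
    (fun s hs => ?_) hB hs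
  rw [← integral_derivFst_derivFst_smul_of_harmonic isOpen_Ioo hu hs (hharm s hs) (huT s hs)
    hφ hφ' hφT]
  exact hasDerivAt_integral_smul_of_contDiffOn isOpen_Ioo hu₁ hφc hs 0 T

end Modes

section FourierTail

lemma sum_range_add_neg {E : Type*} [AddCommGroup E] (f : ℤ → E) (k : ℕ) :
    ∑ n ∈ Finset.range (k + 1), (f n + f (-n)) = f 0 + ∑ n ∈ Finset.Icc (-k : ℤ) k, f n := by
  induction k with
  | zero => simp
  | succ k ih =>
    rw [Finset.sum_range_succ, ih, Nat.cast_succ, Finset.sum_Icc_succ_eq_add_endpoints]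
    abel

lemma norm_sub_sum_Icc_neg_le_of_hasSum {E : Type*} [NormedAddCommGroup E] {f : ℤ → E} {x : E}
    (hf : HasSum f x) {K q : ℝ} (hq : q < 1) (hfq : ∀ n, ‖f n‖ ≤ K * q ^ n.natAbs) (k : ℕ) :
    ‖x - ∑ n ∈ Finset.Icc (-k : ℤ) k, f n‖ ≤ 2 * K * q ^ (k + 1) / (1 - q) := by
  have hpair (n : ℕ) : ‖f n + f (-n)‖ ≤ 2 * K * q ^ n := by
    have h₁ := hfq n
    have h₂ := hfq (-n)
    rw [Int.natAbs_neg] at h₂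
    rw [Int.natAbs_natCast] at h₁ h₂
    linarith [norm_add_le (f n) (f (-n))]
  have htail := norm_sub_le_of_geometric_bound_of_hasSum hq hpair hf.nat_add_neg (k + 1)
  rw [sum_range_add_neg, norm_sub_rev] at htail
  convert! htail using 2
  abel

variable (T : ℝ) (f : ℝ → ℝ)

/-- The `n`-th Fourier coefficient of a `T`-periodic function on `ℝ`. Periodicity is not part of the
definition, so that it applies to the slices `u (s, ·)` of a function on `ℝ × ℝ`. -/
noncomputable def periodicCoeff (n : ℤ) : ℂ :=
  (1 / T) • ∫ θ in 0..T, f θ • fourier (-n) (θ : AddCircle T)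

/-- The symmetric partial sum, over the frequencies `|n| ≤ k`, of the Fourier series of a
`T`-periodic function on `ℝ`. -/
noncomputable def periodicPartialSum (k : ℕ) (θ : ℝ) : ℂ :=
  ∑ n ∈ Finset.Icc (-k : ℤ) k, periodicCoeff T f n * fourier n (θ : AddCircle T)

variable {T f} {K q : ℝ}

lemma norm_fourier_apply (n : ℤ) (x : AddCircle T) : ‖fourier n x‖ = 1 := by
  rw [fourier_apply, Circle.norm_coe]

lemma norm_integral_smul_fourier_le (hT : 0 ≤ T) (hf : ∀ θ, |f θ| ≤ K) (n : ℤ) :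
    ‖∫ θ in 0..T, f θ • fourier n (θ : AddCircle T)‖ ≤ K * T := by
  have h := intervalIntegral.norm_integral_le_of_norm_le_const (a := 0) (b := T)
    (f := fun θ : ℝ => f θ • fourier n (θ : AddCircle T)) (C := K) fun θ _ => by
      rw [norm_smul, norm_fourier_apply, mul_one]
      exact hf θ
  rwa [sub_zero, abs_of_nonneg hT] at h

lemma norm_periodicCoeff_le (hT : 0 < T) (hf : ∀ θ, |f θ| ≤ K) (n : ℤ) :
    ‖periodicCoeff T f n‖ ≤ K := by
  rw [periodicCoeff, norm_smul, Real.norm_of_nonneg (by positivity), one_div_mul_eq_div,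
    div_le_iff₀ hT]
  exact norm_integral_smul_fourier_le hT.le hf (-n)

lemma norm_periodicCoeff_mul_fourier (n : ℤ) (x : AddCircle T) :
    ‖periodicCoeff T f n * fourier n x‖ = ‖periodicCoeff T f n‖ := by
  rw [norm_mul, norm_fourier_apply, mul_one]

lemma norm_periodicPartialSum_le (hcoeff : ∀ n, ‖periodicCoeff T f n‖ ≤ K) (k : ℕ) (θ : ℝ) :
    ‖periodicPartialSum T f k θ‖ ≤ (2 * k + 1) * K := by
  have hcard : (Finset.Icc (-k : ℤ) k).card = 2 * k + 1 := by
    rw [Int.card_Icc]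
    omega
  have hle := norm_sum_le_of_le (Finset.Icc (-k : ℤ) k) fun n _ =>
    (norm_periodicCoeff_mul_fourier n (θ : AddCircle T)).trans_le (hcoeff n)
  rw [Finset.sum_const, hcard, nsmul_eq_mul] at hle
  exact_mod_cast hle

lemma hasSum_periodicCoeff_mul_fourier (hT : 0 < T) (hf : Continuous f)
    (hfT : Function.Periodic f T) (hsum : Summable (periodicCoeff T f)) (θ : ℝ) :
    HasSum (fun n => periodicCoeff T f n * fourier n (θ : AddCircle T)) (f θ : ℂ) := by
  have : Fact (0 < T) := ⟨hT⟩
  let F : C(AddCircle T, ℂ) :=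
    ⟨(hfT.comp ((↑) : ℝ → ℂ)).lift,
      continuous_coinduced_dom.2 (Complex.continuous_ofReal.comp hf)⟩
  have hF : fourierCoeff F = periodicCoeff T f := by
    funext n
    rw [fourierCoeff_eq_intervalIntegral F n 0, zero_add, periodicCoeff]
    congr! 3 with x
    rw [Complex.real_smul, smul_eq_mul, mul_comm]
    rfl
  rw [← hF] at hsum ⊢
  exact has_pointwise_sum_fourier_series_of_summable hsum θ

lemma norm_sub_periodicPartialSum_le (hT : 0 < T) (hf : Continuous f)
    (hfT : Function.Periodic f T) (hfK : ∀ θ, |f θ| ≤ K) (hq : 0 ≤ q)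
    (hcoeff : ∀ n, ‖periodicCoeff T f n‖ ≤ K * q ^ n.natAbs) (k : ℕ) (θ : ℝ) :
    ‖(f θ : ℂ) - periodicPartialSum T f k θ‖ ≤ (k + 1) * 2 ^ (k + 2) * K * q ^ (k + 1) := by
  have hK : 0 ≤ K := (abs_nonneg _).trans (hfK 0)
  rcases le_or_gt q (1 / 2) with hq2 | hq2
  · have hq1 : q < 1 := by linarith
    have hsum : Summable (periodicCoeff T f) := by
      have hgeom := (summable_geometric_of_lt_one hq hq1).mul_left K
      exact .of_nat_of_neg (hgeom.of_norm_bounded fun n => by simpa using hcoeff n)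
        (hgeom.of_norm_bounded fun n => by simpa using hcoeff (-n))
    calc
      _ ≤ 2 * K * q ^ (k + 1) / (1 - q) :=
        norm_sub_sum_Icc_neg_le_of_hasSum (hasSum_periodicCoeff_mul_fourier hT hf hfT hsum θ)
          hq1 (fun n => (norm_periodicCoeff_mul_fourier n _).trans_le (hcoeff n)) k
      _ ≤ 2 * K * q ^ (k + 1) / (1 / 2) := by
        gcongr
        linarith
      _ = 1 * 2 ^ 2 * K * q ^ (k + 1) := by ring
      _ ≤ (k + 1) * 2 ^ (k + 2) * K * q ^ (k + 1) := by
        gcongr <;> simp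
  · calc
      _ ≤ ‖(f θ : ℂ)‖ + ‖periodicPartialSum T f k θ‖ := norm_sub_le _ _
      _ ≤ K + (2 * k + 1) * K := by
        rw [Complex.norm_real]
        gcongr
        · exact hfK θ
        · exact norm_periodicPartialSum_le (norm_periodicCoeff_le hT hfK) k θ
      _ = (k + 1) * 2 * K * 1 := by ring
      _ ≤ (k + 1) * 2 * K * (2 * q) ^ (k + 1) := by
        gcongr
        exact one_le_pow₀ (by linarith)
      _ = (k + 1) * 2 ^ (k + 2) * K * q ^ (k + 1) := by ring

end FourierTail

section RealForm

lemma fourier_two_pi_apply (n : ℤ) (θ : ℝ) : fourier n (θ : AddCircle (2 * Real.pi)) =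
    Real.cos (n * θ) + Real.sin (n * θ) * Complex.I := by
  rw [fourier_coe_apply, Complex.ofReal_cos, Complex.ofReal_sin, ← Complex.exp_mul_I]
  congr 1
  have := Real.pi_ne_zero
  push_cast
  field_simp

variable {f : ℝ → ℝ}

lemma periodicCoeff_two_pi (hf : Continuous f) (n : ℤ) : periodicCoeff (2 * Real.pi) f n =
    1 / (2 * Real.pi) * ((∫ θ in 0..2 * Real.pi, f θ * Real.cos (n * θ) : ℝ) -
      (∫ θ in 0..2 * Real.pi, f θ * Real.sin (n * θ) : ℝ) * Complex.I) := by
  have hint {g : ℝ → ℂ} (hg : Continuous g) : IntervalIntegrable g volume 0 (2 * Real.pi) :=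
    hg.intervalIntegrable _ _
  rw [periodicCoeff, ← intervalIntegral.integral_ofReal, ← intervalIntegral.integral_ofReal,
    ← intervalIntegral.integral_mul_const, ← intervalIntegral.integral_sub (hint (by fun_prop))
    (hint (by fun_prop)), Complex.real_smul]
  push_cast
  congr! 3 with θ
  rw [fourier_two_pi_apply]
  simp only [Int.cast_neg, neg_mul, Real.cos_neg, Complex.ofReal_cos, Complex.ofReal_mul,
    Complex.ofReal_intCast, Real.sin_neg, Complex.ofReal_neg, Complex.ofReal_sin, smul_add,
    Complex.real_smul, smul_neg]
  ring

lemma periodicPartialSum_two_pi (hf : Continuous f) (k : ℕ) (θ : ℝ) :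
    periodicPartialSum (2 * Real.pi) f k θ =
      ((1 / (2 * Real.pi) * (∫ t in 0..2 * Real.pi, f t) +
        ∑ n ∈ Finset.Icc 1 k,
          (1 / Real.pi * (∫ t in 0..2 * Real.pi, f t * Real.cos (n * t)) * Real.cos (n * θ) +
            1 / Real.pi * (∫ t in 0..2 * Real.pi, f t * Real.sin (n * t)) *
              Real.sin (n * θ)) : ℝ) : ℂ) := by
  rw [periodicPartialSum]
  induction k with
  | zero => simp [periodicCoeff_two_pi hf]
  | succ k ih =>
    rw [Nat.cast_succ, Finset.sum_Icc_succ_eq_add_endpoints, ih,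
      Finset.sum_Icc_succ_top (Nat.le_add_left 1 k)]
    simp only [periodicCoeff_two_pi hf, fourier_two_pi_apply, Int.cast_neg, neg_mul, Real.cos_neg,
      Real.sin_neg, mul_neg, intervalIntegral.integral_neg]
    push_cast
    linear_combination
      (-(1 / (Real.pi : ℂ)) * ((∫ t in 0..2 * Real.pi, f t * Real.sin ((k + 1) * t) : ℝ) : ℂ) *
        Complex.sin ((k + 1) * θ)) * Complex.I_sq

end RealForm

section Cylinder

variable {u : ℝ × ℝ → ℝ} {M ε T s : ℝ}

lemma hasDerivAt_deriv_fourier (T : ℝ) (n : ℤ) (θ : ℝ) :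
    HasDerivAt (fun θ : ℝ => 2 * Real.pi * Complex.I * n / T * fourier n (θ : AddCircle T))
      (-(2 * Real.pi * |(n : ℝ)| / T) ^ 2 • fourier n (θ : AddCircle T)) θ := by
  convert! (hasDerivAt_fourier T n θ).const_mul (2 * Real.pi * Complex.I * n / T : ℂ) using 1
  rw [div_pow, mul_pow, sq_abs, Complex.real_smul]
  push_cast
  linear_combination
    (-(2 * Real.pi * n / T : ℂ) ^ 2 * fourier n (θ : AddCircle T)) * Complex.I_sq

lemma norm_periodicCoeff_le_of_harmonic (hT : 0 < T)
    (hu : ContDiffOn ℝ 2 u (Ioo (-M) M ×ˢ univ))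
    (hharm : ∀ s ∈ Ioo (-M) M, ∀ θ,
      derivFst (derivFst u) (s, θ) + derivSnd (derivSnd u) (s, θ) = 0)
    (huT : ∀ s ∈ Ioo (-M) M, Function.Periodic (fun θ => u (s, θ)) T)
    (hε : ∀ s ∈ Icc (-M) M, ∀ θ, |u (s, θ)| ≤ ε) (hs : s ∈ Icc (-M) M) (n : ℤ) :
    ‖periodicCoeff T (fun θ => u (s, θ)) n‖ ≤
      2 * ε * Real.exp (-(2 * Real.pi / T * (M - |s|))) ^ n.natAbs := by
  have hε0 : 0 ≤ ε := (abs_nonneg _).trans (hε s hs 0)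
  have htriv : ‖periodicCoeff T (fun θ => u (s, θ)) n‖ ≤ 2 * ε :=
    (norm_periodicCoeff_le hT (hε s hs) n).trans (by linarith)
  rcases (abs_le.2 hs).eq_or_lt with hsM | hsM
  · simpa [hsM] using htriv
  rcases eq_or_ne n 0 with rfl | hn
  · simpa using htriv
  have hn' : 0 < |((-n : ℤ) : ℝ)| := abs_pos.2 (by exact_mod_cast neg_ne_zero.2 hn)
  have hdecay := norm_integral_smul_le_of_harmonic (l := 2 * Real.pi * |((-n : ℤ) : ℝ)| / T)
    hu hharm huT (by have := Real.pi_pos; positivity) (hasDerivAt_fourier T (-n))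
    (hasDerivAt_deriv_fourier T (-n))
    (fun θ => by rw [AddCircle.coe_add_period])
    (fun t ht => norm_integral_smul_fourier_le hT.le (hε t (Ioo_subset_Icc_self ht)) (-n))
    (abs_lt.1 hsM)
  rw [periodicCoeff, norm_smul, Real.norm_of_nonneg (by positivity), one_div_mul_eq_div,
    div_le_iff₀ hT]
  refine hdecay.trans_eq ?_
  rw [← Real.exp_nat_mul, Nat.cast_natAbs, Int.cast_neg, abs_neg, Int.cast_abs]
  ring_nf

lemma norm_sub_periodicPartialSum_le_of_harmonic (hT : 0 < T)
    (hcont : ContinuousOn u (Icc (-M) M ×ˢ univ))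
    (hu : ContDiffOn ℝ 2 u (Ioo (-M) M ×ˢ univ))
    (hharm : ∀ s ∈ Ioo (-M) M, ∀ θ,
      derivFst (derivFst u) (s, θ) + derivSnd (derivSnd u) (s, θ) = 0)
    (huT : ∀ s ∈ Icc (-M) M, Function.Periodic (fun θ => u (s, θ)) T)
    (hε : ∀ s ∈ Icc (-M) M, ∀ θ, |u (s, θ)| ≤ ε) (hs : s ∈ Icc (-M) M) (k : ℕ) (θ : ℝ) :
    ‖(u (s, θ) : ℂ) - periodicPartialSum T (fun θ => u (s, θ)) k θ‖ ≤
      (k + 1) * 2 ^ (k + 3) * ε * Real.exp (-(2 * Real.pi / T * (M - |s|))) ^ (k + 1) := by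
  have hε0 : 0 ≤ ε := (abs_nonneg _).trans (hε s hs 0)
  refine (norm_sub_periodicPartialSum_le hT (K := 2 * ε) (continuous_slice hcont hs) (huT s hs)
    (fun θ => (hε s hs θ).trans (by linarith)) (Real.exp_nonneg _)
    (norm_periodicCoeff_le_of_harmonic hT hu hharm
      (fun t ht => huT t (Ioo_subset_Icc_self ht)) hε hs) k θ).trans_eq ?_
  ring

end Cylinder

theorem harmonic_cylinder_truncation_general (k : ℕ) {M ε : ℝ} {u : ℝ × ℝ → ℝ}
    (huT : ∀ s ∈ Icc (-M) M, Function.Periodic (fun θ => u (s, θ)) (2 * Real.pi))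
    (hcont : ContinuousOn u (Icc (-M) M ×ˢ univ))
    (hu : ContDiffOn ℝ 2 u (Ioo (-M) M ×ˢ univ))
    (hharm : ∀ s ∈ Ioo (-M) M, ∀ θ,
      derivFst (derivFst u) (s, θ) + derivSnd (derivSnd u) (s, θ) = 0)
    (hε : ∀ s ∈ Icc (-M) M, ∀ θ, |u (s, θ)| ≤ ε) {a₀ b₀ : ℝ} {a b c d : ℕ → ℝ}
    (hcoeff : ∀ s ∈ Icc (-M) M,
      (1 / (2 * Real.pi)) * ∫ θ in (0 : ℝ)..(2 * Real.pi), u (s, θ) = a₀ + b₀ * s ∧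
      ∀ n : ℕ, 1 ≤ n → n ≤ k →
        ((1 / Real.pi) * ∫ θ in (0 : ℝ)..(2 * Real.pi), u (s, θ) * Real.cos (n * θ) =
            a n * Real.exp (n * s) + c n * Real.exp (-(n * s))) ∧
        ((1 / Real.pi) * ∫ θ in (0 : ℝ)..(2 * Real.pi), u (s, θ) * Real.sin (n * θ) =
            b n * Real.exp (n * s) + d n * Real.exp (-(n * s))))
    {s : ℝ} (hs : s ∈ Icc (-M) M) (θ : ℝ) :
    |u (s, θ) -
        (a₀ + b₀ * s +
          ∑ n ∈ Finset.Icc 1 k,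
            (a n * Real.exp (n * s) * Real.cos (n * θ) +
              b n * Real.exp (n * s) * Real.sin (n * θ) +
              c n * Real.exp (-(n * s)) * Real.cos (n * θ) +
              d n * Real.exp (-(n * s)) * Real.sin (n * θ)))| ≤
      (k + 1) * 2 ^ (k + 3) * ε * Real.exp (-((k + 1) * M)) * Real.exp ((k + 1) * |s|) := by
  have htail := norm_sub_periodicPartialSum_le_of_harmonic Real.two_pi_pos hcont hu hharm huT hε hs
    k θ
  rw [periodicPartialSum_two_pi (continuous_slice hcont hs), ← Complex.ofReal_sub,
    Complex.norm_real, Real.norm_eq_abs, (hcoeff s hs).1] at htail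
  convert! htail using 1
  · congr! 4 with n hn
    obtain ⟨hn1, hnk⟩ := Finset.mem_Icc.1 hn
    rw [((hcoeff s hs).2 n hn1 hnk).1, ((hcoeff s hs).2 n hn1 hnk).2]
    ring
  · rw [div_self Real.two_pi_pos.ne', one_mul, ← Real.exp_nat_mul, mul_assoc _ (Real.exp _),
      ← Real.exp_add]
    push_cast
    ring_nf

/-- Lemma 3.4: for a harmonic function `u` on `[-M,M] × S¹` with `|u| ≤ ε` and `M ≥ 1`,
the remainder after subtracting the degree-`k` truncation `P_k` of its Fourier expansion
satisfies `|u - P_k| ≤ C ε e^{-(k+1)M} e^{(k+1)|s|}`, with `C = C(k)` independent of `M`. -/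
theorem harmonic_cylinder_truncation (k : ℕ) :
    ∃ C : ℝ, 0 < C ∧
      ∀ (M ε : ℝ), 1 ≤ M → 0 < ε →
      ∀ u : ℝ × ℝ → ℝ,
        (∀ s θ : ℝ, u (s, θ + 2 * Real.pi) = u (s, θ)) →
        ContDiffOn ℝ 2 u (Set.Icc (-M) M ×ˢ (Set.univ : Set ℝ)) →
        (∀ s ∈ Set.Icc (-M) M, ∀ θ : ℝ,
          deriv (fun s' => deriv (fun s'' => u (s'', θ)) s') s +
            deriv (fun θ' => deriv (fun θ'' => u (s, θ'')) θ') θ = 0) →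
        (∀ s ∈ Set.Icc (-M) M, ∀ θ : ℝ, |u (s, θ)| ≤ ε) →
        ∀ (a₀ b₀ : ℝ) (a b c d : ℕ → ℝ),
          (∀ s ∈ Set.Icc (-M) M,
            (1 / (2 * Real.pi)) * ∫ θ in (0:ℝ)..(2 * Real.pi), u (s, θ) = a₀ + b₀ * s ∧
            ∀ n : ℕ, 1 ≤ n → n ≤ k →
              ((1 / Real.pi) * ∫ θ in (0:ℝ)..(2 * Real.pi), u (s, θ) * Real.cos (n * θ) =
                  a n * Real.exp (n * s) + c n * Real.exp (-(n * s))) ∧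
              ((1 / Real.pi) * ∫ θ in (0:ℝ)..(2 * Real.pi), u (s, θ) * Real.sin (n * θ) =
                  b n * Real.exp (n * s) + d n * Real.exp (-(n * s)))) →
          ∀ s ∈ Set.Icc (-M) M, ∀ θ : ℝ,
            |u (s, θ) -
                (a₀ + b₀ * s +
                  ∑ n ∈ Finset.Icc 1 k,
                    (a n * Real.exp (n * s) * Real.cos (n * θ) +
                      b n * Real.exp (n * s) * Real.sin (n * θ) +
                      c n * Real.exp (-(n * s)) * Real.cos (n * θ) +
                      d n * Real.exp (-(n * s)) * Real.sin (n * θ)))| ≤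
              C * ε * Real.exp (-((k + 1) * M)) * Real.exp ((k + 1) * |s|) :=
  ⟨(k + 1) * 2 ^ (k + 3), by positivity, fun M ε _ _ u huT hu hharm hε a₀ b₀ a b c d hcoeff
    s hs θ => harmonic_cylinder_truncation_general k (fun s _ => huT s) hu.continuousOn
    (hu.mono (prod_mono_left Ioo_subset_Icc_self)) (fun s hs => hharm s (Ioo_subset_Icc_self hs))
    hε hcoeff hs θ⟩
end

section
/- For every C₁ > 0 there exist constants λ₀ > 0 and C₂ > 0 (depending only on C₁) such that: for every λ ∈ (0, λ₀) and every nonnegative twice continuously differentiable function w defined on the annulus A₁ = {x ∈ ℝ² : 8λ ≤ |x| ≤ 1/8} satisfying Δw(x) ≥ −C₁ (1 + λ/|x|²)² w(x) for all x ∈ A₁ (where Δ is the Euclidean Laplacian on ℝ²), one has sup_{x ∈ A₂} w(x) ≤ C₂ ∫_{A₁} w(x) (1 + λ/|x|²)² dx, where A₂ = {x ∈ ℝ² : 16λ ≤ |x| ≤ 1/16}. -/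
/-- The Euclidean norm of a point of the plane `ℝ × ℝ`. -/
noncomputable def euclNorm (x : ℝ × ℝ) : ℝ := Real.sqrt (x.1 ^ 2 + x.2 ^ 2)

/-- The closed annulus `{x ∈ ℝ² : r ≤ |x| ≤ R}` in the plane. -/
def annulus (r R : ℝ) : Set (ℝ × ℝ) := {x | r ≤ euclNorm x ∧ euclNorm x ≤ R}

/-!
A nonnegative subsolution of `Δ w + V w = 0` is at most twice its maximum over the boundary of a
compact set, provided that the set carries a function `φ` with `0 ≤ φ ≤ 1 / 2` and `V < Δ φ`: the
function `1 - φ` is then a strict supersolution.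

With `φ = k |x|²` this bounds the value of a radial subsolution at the centre of a small disc by
twice its value on any concentric circle, hence by its mean over the disc. A general subsolution is
made radial up to an arbitrarily small error by averaging over the rotations by multiples of
`2π / N`.

The catenoid metric is invariant under `|x| ↦ λ / |x|` and is nearly flat at both ends of the neck.
There, that is for `δ ≤ |p|` or `|p| ≤ λ / δ`, the mean value inequality on the disc of radius
`δ |p|` about `p` bounds `w p` by the integral. In the middle part `λ / δ ≤ |x| ≤ δ` the conformal
factor is very large, but `φ = C₁ (|x|² + λ² / |x|²)` is small and `Δ φ` exceeds the potential
everywhere, so the bound on the two boundary circles propagates inwards with a factor of `2`.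
-/

open Filter InnerProductSpace Laplacian MeasureTheory Metric Module Set Topology

section Laplacian

variable {E : Type*} [NormedAddCommGroup E]

theorem deriv_deriv_comp_line [NormedSpace ℝ E] {f : E → ℝ} {x : E} (hf : ContDiffAt ℝ 2 f x)
    (v : E) :
    deriv (deriv fun s : ℝ => f (x + s • v)) 0 = iteratedFDeriv ℝ 2 f x ![v, v] := by
  have hline (s : ℝ) : HasDerivAt (fun s : ℝ => x + s • v) v s := by
    simpa using ((hasDerivAt_id s).smul_const v).const_add x
  have hlim : Tendsto (fun s : ℝ => x + s • v) (𝓝 0) (𝓝 x) := by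
    simpa [ContinuousAt] using (hline 0).continuousAt
  have hfst : deriv (fun s : ℝ => f (x + s • v)) =ᶠ[𝓝 0] fun s => fderiv ℝ f (x + s • v) v := by
    filter_upwards [hlim.eventually (hf.eventually (by simp))] with s hs
    exact ((hs.differentiableAt (by simp)).hasFDerivAt.comp_hasDerivAt s (hline s)).deriv
  have hsnd : HasFDerivAt (fderiv ℝ f) (fderiv ℝ (fderiv ℝ f) x) (x + (0 : ℝ) • v) := by
    simpa using ((hf.fderiv_right (m := 1) (by norm_num)).differentiableAt (by simp)).hasFDerivAt
  rw [hfst.deriv_eq, iteratedFDeriv_two_apply]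
  exact ((ContinuousLinearMap.apply ℝ ℝ v).hasFDerivAt.comp_hasDerivAt (0 : ℝ)
    (hsnd.comp_hasDerivAt (0 : ℝ) (hline 0))).deriv

theorem deriv_deriv_nonpos_of_isLocalMax {φ : ℝ → ℝ} {a : ℝ} (hφ : ContinuousAt φ a)
    (hmax : IsLocalMax φ a) : deriv (deriv φ) a ≤ 0 := by
  by_contra! hpos
  have hmin : IsLocalMin φ a := isLocalMin_of_deriv_deriv_pos hpos hmax.deriv_eq_zero hφ
  have hconst : φ =ᶠ[𝓝 a] fun _ => φ a := by
    filter_upwards [hmax, hmin] with s h₁ h₂ using le_antisymm h₁ h₂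
  simp [hconst.deriv.deriv_eq] at hpos

variable [InnerProductSpace ℝ E] [FiniteDimensional ℝ E]

theorem laplacian_eq_sum_deriv_deriv {ι : Type*} [Fintype ι] (b : OrthonormalBasis ι ℝ E)
    {f : E → ℝ} {x : E} (hf : ContDiffAt ℝ 2 f x) :
    Δ f x = ∑ i, deriv (deriv fun s : ℝ => f (x + s • b i)) 0 := by
  simp [laplacian_eq_iteratedFDeriv_orthonormalBasis f b, deriv_deriv_comp_line hf]

theorem laplacian_nonpos_of_isLocalMax {f : E → ℝ} {x : E} (hf : ContDiffAt ℝ 2 f x)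
    (hmax : IsLocalMax f x) : Δ f x ≤ 0 := by
  rw [laplacian_eq_sum_deriv_deriv (stdOrthonormalBasis ℝ E) hf]
  refine Finset.sum_nonpos fun i _ => ?_
  have hline : Tendsto (fun s : ℝ => x + s • stdOrthonormalBasis ℝ E i) (𝓝 0) (𝓝 x) :=
    Continuous.tendsto' (by fun_prop) _ _ (by simp)
  refine deriv_deriv_nonpos_of_isLocalMax ?_ ?_
  · simpa [ContinuousAt, Function.comp_def] using hf.continuousAt.tendsto.comp hline
  · simpa [IsLocalMax, IsMaxFilter] using hline.eventually hmax

theorem laplacian_comp_linearIsometryEquiv (f : E → ℝ) (L : E ≃ₗᵢ[ℝ] E) (x : E) :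
    Δ (fun y => f (L y)) x = Δ f (L x) := by
  have key := L.toContinuousLinearEquiv.iteratedFDerivWithin_comp_right f uniqueDiffOn_univ
    (mem_univ (L x)) 2
  simp only [preimage_univ, iteratedFDerivWithin_univ] at key
  rw [laplacian_eq_iteratedFDeriv_orthonormalBasis _ (stdOrthonormalBasis ℝ E),
    laplacian_eq_iteratedFDeriv_orthonormalBasis f ((stdOrthonormalBasis ℝ E).map L)]
  refine Finset.sum_congr rfl fun i _ => ?_
  rw [show (fun y => f (L y)) = f ∘ L.toContinuousLinearEquiv from rfl, key]
  simp [iteratedFDeriv_two_apply]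

theorem laplacian_comp_const_add (f : E → ℝ) (p x : E) :
    Δ (fun y => f (p + y)) x = Δ f (p + x) := by
  simp only [laplacian_eq_iteratedFDeriv_stdOrthonormalBasis, iteratedFDeriv_comp_add_left]

theorem deriv_deriv_comp_quadratic {g : ℝ → ℝ} {c : ℝ} (hg : ContDiffAt ℝ 2 g c) (a b : ℝ) :
    deriv (deriv fun s : ℝ => g (c + 2 * a * s + b * s ^ 2)) 0 =
      4 * a ^ 2 * deriv (deriv g) c + 2 * b * deriv g c := by
  have hpoly (s : ℝ) :
      HasDerivAt (fun s : ℝ => c + 2 * a * s + b * s ^ 2) (2 * a + 2 * b * s) s := by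
    convert! (((hasDerivAt_id s).const_mul (2 * a)).const_add c).add
      ((hasDerivAt_pow 2 s).const_mul b) using 1
    simp; ring
  have hlim : Tendsto (fun s : ℝ => c + 2 * a * s + b * s ^ 2) (𝓝 0) (𝓝 c) := by
    simpa [ContinuousAt] using (hpoly 0).continuousAt
  have hfst : (deriv fun s : ℝ => g (c + 2 * a * s + b * s ^ 2)) =ᶠ[𝓝 0]
      fun s => deriv g (c + 2 * a * s + b * s ^ 2) * (2 * a + 2 * b * s) := by
    filter_upwards [hlim.eventually (hg.eventually (by simp))] with s hs
    exact ((hs.differentiableAt (by simp)).hasDerivAt.comp s (hpoly s)).deriv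
  have hsnd : HasDerivAt (deriv g) (deriv (deriv g) c) (c + 2 * a * 0 + b * 0 ^ 2) := by
    simpa using ((hg.derivWithin (m := 1) (by norm_num)).differentiableAt (by simp)).hasDerivAt
  have hlin : HasDerivAt (fun s : ℝ => 2 * a + 2 * b * s) (2 * b) 0 := by
    simpa using ((hasDerivAt_id (0 : ℝ)).const_mul (2 * b)).const_add (2 * a)
  have hcomp : HasDerivAt (fun s : ℝ => deriv g (c + 2 * a * s + b * s ^ 2))
      (deriv (deriv g) c * (2 * a + 2 * b * 0)) 0 :=
    HasDerivAt.comp (h := fun s : ℝ => c + 2 * a * s + b * s ^ 2) (0 : ℝ) hsnd (hpoly 0)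
  rw [hfst.deriv_eq, (hcomp.fun_mul hlin).deriv]
  simp only [mul_zero, add_zero, ne_eq, OfNat.ofNat_ne_zero, not_false_eq_true, zero_pow]
  ring

theorem laplacian_comp_norm_sq {g : ℝ → ℝ} {x : E} (hg : ContDiffAt ℝ 2 g (‖x‖ ^ 2)) :
    Δ (fun y : E => g (‖y‖ ^ 2)) x =
      4 * ‖x‖ ^ 2 * deriv (deriv g) (‖x‖ ^ 2) + 2 * finrank ℝ E * deriv g (‖x‖ ^ 2) := by
  let b := stdOrthonormalBasis ℝ E
  have hcomp : ContDiffAt ℝ 2 (fun y : E => g (‖y‖ ^ 2)) x :=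
    ContDiffAt.comp x hg (contDiff_norm_sq ℝ).contDiffAt
  have hline (i) (s : ℝ) :
      ‖x + s • b i‖ ^ 2 = ‖x‖ ^ 2 + 2 * inner ℝ x (b i) * s + 1 * s ^ 2 := by
    rw [norm_add_sq_real, inner_smul_right, norm_smul, b.norm_eq_one, mul_one, Real.norm_eq_abs,
      sq_abs]
    ring
  simp only [laplacian_eq_sum_deriv_deriv b hcomp, hline, deriv_deriv_comp_quadratic hg,
    Finset.sum_add_distrib, ← Finset.sum_mul, ← Finset.mul_sum]
  simp only [b.sum_sq_inner_left, Finset.sum_const, Finset.card_univ, Fintype.card_fin,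
    nsmul_eq_mul]
  ring

theorem laplacian_const_mul_norm_sq (k : ℝ) (x : E) :
    Δ (fun y : E => k * ‖y‖ ^ 2) x = 2 * finrank ℝ E * k := by
  have hderiv : deriv (fun t : ℝ => k * t) = fun _ => k := funext fun t => by simp
  rw [laplacian_comp_norm_sq (g := fun t => k * t) (by fun_prop), hderiv]
  simp

end Laplacian

section Comparison

variable {E : Type*} [NormedAddCommGroup E] [InnerProductSpace ℝ E] [FiniteDimensional ℝ E]
  {K s t : Set E} {f g φ h V W : E → ℝ} {M : ℝ}

theorem le_mul_of_laplacian_lt (hK : IsCompact K) (hfK : ContinuousOn f K)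
    (hhK : ContinuousOn h K) (hf : ∀ x ∈ interior K, ContDiffAt ℝ 2 f x)
    (hh : ∀ x ∈ interior K, ContDiffAt ℝ 2 h x) (hpos : ∀ x ∈ K, 0 < h x)
    (hsub : ∀ x ∈ interior K, -V x * f x ≤ Δ f x)
    (hsuper : ∀ x ∈ interior K, Δ h x < -V x * h x) (hM : 0 ≤ M)
    (hfrontier : ∀ x ∈ frontier K, f x ≤ M * h x) {x : E} (hx : x ∈ K) : f x ≤ M * h x := by
  obtain ⟨z, hz, hzmax⟩ := hK.exists_isMaxOn ⟨x, hx⟩ (hfK.div hhK fun y hy => (hpos y hy).ne')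
  set m := f z / h z
  have hle : ∀ y ∈ K, f y ≤ m * h y := fun y hy => (div_le_iff₀ (hpos y hy)).1 (hzmax hy)
  have hfz : f z = m * h z := (div_mul_cancel₀ _ (hpos z hz).ne').symm
  suffices m ≤ M from (hle x hx).trans (mul_le_mul_of_nonneg_right this (hpos x hx).le)
  by_contra! hMm
  have hzi : z ∈ interior K := by
    by_contra hni
    have hz' := hfrontier z ⟨subset_closure hz, hni⟩
    exact hMm.not_ge (le_of_mul_le_mul_right (hfz ▸ hz') (hpos z hz))
  have hmax : IsLocalMax (f - m • h) z := by
    filter_upwards [mem_interior_iff_mem_nhds.1 hzi] with y hy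
    simpa [hfz] using hle y hy
  have hmh : ContDiffAt ℝ 2 (m • h) z := (hh z hzi).const_smul m
  have hΔ : Δ (f - m • h) z ≤ 0 := laplacian_nonpos_of_isLocalMax ((hf z hzi).sub hmh) hmax
  rw [(hf z hzi).laplacian_sub hmh, laplacian_smul m (hh z hzi), smul_eq_mul] at hΔ
  have hΔf := hsub z hzi
  have hΔh := mul_lt_mul_of_pos_left (hsuper z hzi) (hM.trans_lt hMm)
  rw [hfz] at hΔf
  linarith

/-- `f` is a nonnegative classical subsolution of the Schrödinger equation `Δ f + V f = 0` at
every point of `s`. The set `s` need not be open: `f` is required to be `C²` in a neighbourhood of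
each of its points. -/
structure IsNonnegSubsolution (V : E → ℝ) (s : Set E) (f : E → ℝ) : Prop where
  contDiffAt : ∀ x ∈ s, ContDiffAt ℝ 2 f x
  nonneg : ∀ x ∈ s, 0 ≤ f x
  neg_mul_le_laplacian : ∀ x ∈ s, -V x * f x ≤ Δ f x

namespace IsNonnegSubsolution

theorem mono (hf : IsNonnegSubsolution V t f) (hst : s ⊆ t) (hVW : ∀ x ∈ s, V x ≤ W x) :
    IsNonnegSubsolution W s f where
  contDiffAt x hx := hf.contDiffAt x (hst hx)
  nonneg x hx := hf.nonneg x (hst hx)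
  neg_mul_le_laplacian x hx :=
    (mul_le_mul_of_nonneg_right (neg_le_neg (hVW x hx)) (hf.nonneg x (hst hx))).trans
      (hf.neg_mul_le_laplacian x (hst hx))

theorem continuousOn (hf : IsNonnegSubsolution V s f) : ContinuousOn f s :=
  fun x hx => (hf.contDiffAt x hx).continuousAt.continuousWithinAt

theorem add (hf : IsNonnegSubsolution V s f) (hg : IsNonnegSubsolution V s g) :
    IsNonnegSubsolution V s (f + g) where
  contDiffAt x hx := (hf.contDiffAt x hx).add (hg.contDiffAt x hx)
  nonneg x hx := add_nonneg (hf.nonneg x hx) (hg.nonneg x hx)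
  neg_mul_le_laplacian x hx := by
    rw [(hf.contDiffAt x hx).laplacian_add (hg.contDiffAt x hx), Pi.add_apply, mul_add]
    exact add_le_add (hf.neg_mul_le_laplacian x hx) (hg.neg_mul_le_laplacian x hx)

theorem const_smul (hf : IsNonnegSubsolution V s f) {a : ℝ} (ha : 0 ≤ a) :
    IsNonnegSubsolution V s (a • f) where
  contDiffAt x hx := (hf.contDiffAt x hx).const_smul a
  nonneg x hx := mul_nonneg ha (hf.nonneg x hx)
  neg_mul_le_laplacian x hx := by
    rw [laplacian_smul a (hf.contDiffAt x hx), Pi.smul_apply, smul_eq_mul, smul_eq_mul,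
      mul_left_comm]
    exact mul_le_mul_of_nonneg_left (hf.neg_mul_le_laplacian x hx) ha

theorem zero : IsNonnegSubsolution V s (0 : E → ℝ) where
  contDiffAt _ _ := contDiffAt_const
  nonneg _ _ := le_rfl
  neg_mul_le_laplacian x _ := by simp [Pi.zero_def]

theorem sum {ι : Type*} {F : ι → E → ℝ} (I : Finset ι)
    (hF : ∀ i, IsNonnegSubsolution V s (F i)) : IsNonnegSubsolution V s (∑ i ∈ I, F i) :=
  Finset.sum_induction F (IsNonnegSubsolution V s) (fun _ _ => add) zero fun i _ => hF i

theorem comp_linearIsometryEquiv (hf : IsNonnegSubsolution V s f) (L : E ≃ₗᵢ[ℝ] E) :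
    IsNonnegSubsolution (fun x => V (L x)) (L ⁻¹' s) fun x => f (L x) where
  contDiffAt x hx := (hf.contDiffAt _ hx).comp x L.contDiff.contDiffAt
  nonneg _ hx := hf.nonneg _ hx
  neg_mul_le_laplacian x hx :=
    (hf.neg_mul_le_laplacian _ hx).trans_eq (laplacian_comp_linearIsometryEquiv f L x).symm

theorem comp_const_add (hf : IsNonnegSubsolution V s f) (p : E) :
    IsNonnegSubsolution (fun x => V (p + x)) ((p + ·) ⁻¹' s) fun x => f (p + x) where
  contDiffAt x hx := (hf.contDiffAt _ hx).comp x (contDiff_const.add contDiff_id).contDiffAt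
  nonneg _ hx := hf.nonneg _ hx
  neg_mul_le_laplacian x hx :=
    (hf.neg_mul_le_laplacian _ hx).trans_eq (laplacian_comp_const_add f p x).symm

theorem le_two_mul_of_lt_laplacian (hf : IsNonnegSubsolution V K f) (hK : IsCompact K)
    (hV : ∀ x ∈ K, 0 ≤ V x) (hφ : ∀ x ∈ K, ContDiffAt ℝ 2 φ x) (hφ₀ : ∀ x ∈ K, 0 ≤ φ x)
    (hφ₁ : ∀ x ∈ K, φ x ≤ 1 / 2) (hVφ : ∀ x ∈ K, V x < Δ φ x) (hM : 0 ≤ M)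
    (hfrontier : ∀ x ∈ frontier K, f x ≤ M) {x : E} (hx : x ∈ K) : f x ≤ 2 * M := by
  -- `1 - φ` is a strict supersolution with values in `[1 / 2, 1]`
  let h : E → ℝ := (fun _ => 1) - φ
  have happly (y : E) : h y = 1 - φ y := rfl
  have hh : ∀ y ∈ K, ContDiffAt ℝ 2 h y := fun y hy => contDiffAt_const.sub (hφ y hy)
  have hsuper : ∀ y ∈ K, Δ h y < -V y * h y := fun y hy => by
    rw [contDiffAt_const.laplacian_sub (hφ y hy), laplacian_const, Pi.zero_apply, happly]
    linarith [hVφ y hy, mul_nonneg (hV y hy) (hφ₀ y hy)]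
  have hfrontier' : ∀ y ∈ frontier K, f y ≤ 2 * M * h y := fun y hy => by
    refine (hfrontier y hy).trans ?_
    rw [happly]
    nlinarith [hφ₁ y (hK.isClosed.frontier_subset hy)]
  refine (le_mul_of_laplacian_lt hK hf.continuousOn
    (fun y hy => (hh y hy).continuousAt.continuousWithinAt)
    (fun y hy => hf.contDiffAt y (interior_subset hy)) (fun y hy => hh y (interior_subset hy))
    (fun y hy => by linarith [happly y, hφ₁ y hy])
    (fun y hy => hf.neg_mul_le_laplacian y (interior_subset hy))
    (fun y hy => hsuper y (interior_subset hy)) (by positivity) hfrontier' hx).trans ?_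
  exact mul_le_of_le_one_right (by positivity) (by linarith [happly x, hφ₀ x hx])

end IsNonnegSubsolution

end Comparison

section IsometryMean

variable {E ι : Type*} [NormedAddCommGroup E] [InnerProductSpace ℝ E] [Fintype ι]
  {L : ι → E ≃ₗᵢ[ℝ] E} {V f : E → ℝ} {s : Set E}

/-- The average of `f` over a finite family `L` of linear isometries: a discrete substitute for
the spherical average, for which differentiation under the sum is immediate. -/
noncomputable def isometryMean (L : ι → E ≃ₗᵢ[ℝ] E) (f : E → ℝ) : E → ℝ :=
  (Fintype.card ι : ℝ)⁻¹ • ∑ i, fun x => f (L i x)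

theorem isometryMean_apply (L : ι → E ≃ₗᵢ[ℝ] E) (f : E → ℝ) (x : E) :
    isometryMean L f x = (Fintype.card ι : ℝ)⁻¹ * ∑ i, f (L i x) := by
  simp [isometryMean]

theorem isometryMean_zero [Nonempty ι] (L : ι → E ≃ₗᵢ[ℝ] E) (f : E → ℝ) :
    isometryMean L f 0 = f 0 := by
  simp [isometryMean_apply]

theorem isometryMean_le_add_of_forall_le [Nonempty ι] {x y : E} {η : ℝ}
    (h : ∀ i, f (L i y) ≤ f (L i x) + η) : isometryMean L f y ≤ isometryMean L f x + η := by
  have hη : η = (Fintype.card ι : ℝ)⁻¹ * ∑ _i : ι, η := by simp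
  rw [isometryMean_apply, isometryMean_apply, hη, ← mul_add, ← Finset.sum_add_distrib]
  gcongr with i
  exact h i

theorem setIntegral_isometryMean [Nonempty ι] [MeasurableSpace E] [BorelSpace E] {μ : Measure E}
    (hL : ∀ i, MeasurePreserving (L i) μ μ) (hs : ∀ i, L i ⁻¹' s = s)
    (hf : IntegrableOn f s μ) : ∫ x in s, isometryMean L f x ∂μ = ∫ x in s, f x ∂μ := by
  have hemb (i) : MeasurableEmbedding (L i) := (L i).toHomeomorph.measurableEmbedding
  have hint (i) : IntegrableOn (fun x => f (L i x)) s μ := by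
    simpa [hs i, Function.comp_def] using
      ((hL i).integrableOn_comp_preimage (hemb i) (s := s)).2 hf
  have hterm (i) : ∫ x in s, f (L i x) ∂μ = ∫ x in s, f x ∂μ := by
    simpa [hs i] using (hL i).setIntegral_preimage_emb (hemb i) f s
  simp only [isometryMean_apply]
  rw [integral_const_mul, integral_finsetSum _ fun i _ => hint i]
  simp [hterm]

theorem IsNonnegSubsolution.isometryMean [FiniteDimensional ℝ E] (hf : IsNonnegSubsolution V s f)
    (hV : ∀ i x, V (L i x) = V x) (hs : ∀ i, L i ⁻¹' s = s) :
    IsNonnegSubsolution V s (isometryMean L f) :=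
  (IsNonnegSubsolution.sum _ fun i => by
    simpa only [hV, hs] using hf.comp_linearIsometryEquiv (L i)).const_smul (by positivity)

end IsometryMean

section NearlyRadial

variable {E : Type*} [NormedAddCommGroup E] [InnerProductSpace ℝ E] [FiniteDimensional ℝ E]
  [Nontrivial E] {f : E → ℝ} {k R η : ℝ}

theorem IsNonnegSubsolution.apply_zero_le_of_nearly_radial
    (hf : IsNonnegSubsolution (fun _ => k) (closedBall 0 R) f) (hk : 0 < k)
    (hkR : k * R ^ 2 ≤ 1 / 2) (hη : 0 ≤ η)
    (hrad : ∀ x y : E, ‖x‖ = ‖y‖ → ‖y‖ ≤ R → f y ≤ f x + η) {x : E} (hx : ‖x‖ ≤ R) :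
    f 0 ≤ 2 * (f x + η) := by
  have hsub : closedBall (0 : E) ‖x‖ ⊆ closedBall 0 R := closedBall_subset_closedBall hx
  refine (hf.mono hsub fun _ _ => le_rfl).le_two_mul_of_lt_laplacian
    (φ := fun y => k * ‖y‖ ^ 2) (isCompact_closedBall 0 ‖x‖) (fun _ _ => hk.le)
    (fun y _ => (contDiff_const.mul (contDiff_norm_sq ℝ)).contDiffAt)
    (fun y _ => by positivity) (fun y hy => ?_) (fun y _ => ?_)
    (add_nonneg (hf.nonneg x (by simpa using hx)) hη) (fun y hy => ?_) (by simp)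
  · refine le_trans ?_ hkR
    gcongr
    simpa using hsub hy
  · have hdim : (1 : ℝ) ≤ finrank ℝ E := mod_cast finrank_pos
    rw [laplacian_const_mul_norm_sq]
    nlinarith
  · have hyx : ‖y‖ = ‖x‖ := by simpa using frontier_closedBall_subset_sphere hy
    exact hrad x y hyx.symm (hyx.trans_le hx)

theorem IsNonnegSubsolution.apply_zero_mul_measureReal_le_of_nearly_radial [MeasurableSpace E]
    [BorelSpace E] {μ : Measure E} [IsFiniteMeasureOnCompacts μ]
    (hf : IsNonnegSubsolution (fun _ => k) (closedBall 0 R) f) (hk : 0 < k)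
    (hkR : k * R ^ 2 ≤ 1 / 2) (hη : 0 ≤ η)
    (hrad : ∀ x y : E, ‖x‖ = ‖y‖ → ‖y‖ ≤ R → f y ≤ f x + η) :
    f 0 * μ.real (closedBall 0 R) ≤
      2 * ((∫ x in closedBall 0 R, f x ∂μ) + η * μ.real (closedBall 0 R)) := by
  have hK : IsCompact (closedBall (0 : E) R) := isCompact_closedBall 0 R
  have hconst (a : ℝ) : IntegrableOn (fun _ : E => a) (closedBall 0 R) μ :=
    integrableOn_const hK.measure_lt_top.ne
  have hint : IntegrableOn f (closedBall 0 R) μ := hf.continuousOn.integrableOn_compact hK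
  calc f 0 * μ.real (closedBall 0 R) = ∫ _ in closedBall (0 : E) R, f 0 ∂μ := by
        rw [setIntegral_const, smul_eq_mul, mul_comm]
    _ ≤ ∫ x in closedBall 0 R, 2 * (f x + η) ∂μ :=
        setIntegral_mono_on (hconst _) ((hint.add (hconst η)).const_mul 2)
          measurableSet_closedBall fun x hx =>
            hf.apply_zero_le_of_nearly_radial hk hkR hη hrad (by simpa using hx)
    _ = 2 * ((∫ x in closedBall 0 R, f x ∂μ) + η * μ.real (closedBall 0 R)) := by
        rw [integral_const_mul, integral_add hint (hconst η), setIntegral_const, smul_eq_mul,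
          mul_comm η]

end NearlyRadial

section PlanarMeanValue

/-- The family of the `N` rotations of the plane by multiples of `2π / N`. -/
noncomputable def cyclicRotation (N : ℕ) [NeZero N] (j : ZMod N) : ℂ ≃ₗᵢ[ℝ] ℂ :=
  rotation (ZMod.toCircle j)

theorem cyclicRotation_add_apply (N : ℕ) [NeZero N] (i j : ZMod N) (z : ℂ) :
    cyclicRotation N (i + j) z = cyclicRotation N i (cyclicRotation N j z) := by
  simp [cyclicRotation, AddChar.map_add_eq_mul]

theorem isometryMean_cyclicRotation_apply (N : ℕ) [NeZero N] (f : ℂ → ℝ) (j : ZMod N) (z : ℂ) :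
    isometryMean (cyclicRotation N) f (cyclicRotation N j z) =
      isometryMean (cyclicRotation N) f z := by
  simp only [isometryMean_apply, ← cyclicRotation_add_apply]
  congr 1
  exact Fintype.sum_equiv (Equiv.addRight j) _ _ fun _ => rfl

theorem norm_exp_mul_I_sub_exp_mul_I_le (α θ : ℝ) :
    ‖Complex.exp (α * Complex.I) - Complex.exp (θ * Complex.I)‖ ≤ |α - θ| := by
  have hfactor : Complex.exp (α * Complex.I) - Complex.exp (θ * Complex.I) =
      Complex.exp (θ * Complex.I) * (Complex.exp (Complex.I * (α - θ : ℝ)) - 1) := by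
    rw [mul_sub, ← Complex.exp_add, mul_one]
    congr 2
    push_cast
    ring
  rw [hfactor, norm_mul, Complex.norm_exp_ofReal_mul_I, one_mul]
  exact Real.norm_exp_I_mul_ofReal_sub_one_le

theorem exists_int_abs_mul_sub_le {a : ℝ} (ha : 0 < a) (θ : ℝ) : ∃ m : ℤ, |a * m - θ| ≤ a / 2 := by
  refine ⟨round (θ / a), ?_⟩
  have hround := mul_le_mul_of_nonneg_left (abs_sub_round (θ / a)) ha.le
  rw [← abs_of_pos ha, ← abs_mul, abs_of_pos ha, mul_sub, mul_div_cancel₀ θ ha.ne',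
    abs_sub_comm] at hround
  linarith

theorem exists_norm_cyclicRotation_sub_le (N : ℕ) [NeZero N] {z w : ℂ} (hzw : ‖z‖ = ‖w‖) :
    ∃ j : ZMod N, ‖cyclicRotation N j z - w‖ ≤ Real.pi / N * ‖z‖ := by
  have hN : (0 : ℝ) < N := mod_cast NeZero.pos N
  let θ := w.arg - z.arg
  have hw : w = Complex.exp (θ * Complex.I) * z := by
    rw [← Complex.norm_mul_exp_arg_mul_I w, ← Complex.norm_mul_exp_arg_mul_I z, hzw,
      mul_left_comm, ← Complex.exp_add]
    simp [θ, ← add_mul]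
  obtain ⟨m, hm⟩ := exists_int_abs_mul_sub_le (a := 2 * Real.pi / N) (by positivity) θ
  have hrot : cyclicRotation N m z =
      Complex.exp ((2 * Real.pi / N * m : ℝ) * Complex.I) * z := by
    rw [cyclicRotation, rotation_apply, ZMod.toCircle_intCast]
    congr 2
    push_cast
    ring
  refine ⟨m, ?_⟩
  rw [hrot, hw, ← sub_mul, norm_mul]
  gcongr
  exact (norm_exp_mul_I_sub_exp_mul_I_le _ _).trans (hm.trans_eq (by ring))

theorem exists_isometryMean_cyclicRotation_le_add {f : ℂ → ℝ} {R η : ℝ}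
    (hf : ContinuousOn f (closedBall 0 R)) (hR : 0 ≤ R) (hη : 0 < η) :
    ∃ (N : ℕ) (_ : NeZero N), ∀ z w : ℂ, ‖z‖ = ‖w‖ → ‖w‖ ≤ R →
      isometryMean (cyclicRotation N) f w ≤ isometryMean (cyclicRotation N) f z + η := by
  obtain ⟨ε, hε, huc⟩ := Metric.uniformContinuousOn_iff.1
    ((isCompact_closedBall (0 : ℂ) R).uniformContinuousOn_of_continuous hf) η hη
  obtain ⟨N, hN⟩ := exists_nat_gt (Real.pi * R / ε)
  have hN₀ : (0 : ℝ) < N := lt_of_le_of_lt (by positivity) hN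
  have : NeZero N := ⟨by rintro rfl; simp at hN₀⟩
  refine ⟨N, this, fun z w hzw hw => ?_⟩
  obtain ⟨j, hj⟩ := exists_norm_cyclicRotation_sub_le N hzw
  have hclose : ‖cyclicRotation N j z - w‖ < ε := by
    refine hj.trans_lt ?_
    rw [div_lt_iff₀ hε] at hN
    rw [div_mul_eq_mul_div, div_lt_iff₀ hN₀, hzw]
    nlinarith [mul_le_mul_of_nonneg_left hw Real.pi_pos.le]
  rw [← isometryMean_cyclicRotation_apply N f j z]
  refine isometryMean_le_add_of_forall_le fun i => ?_
  have hdist : dist (cyclicRotation N i w) (cyclicRotation N i (cyclicRotation N j z)) < ε := by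
    rwa [LinearIsometryEquiv.dist_map, dist_comm, dist_eq_norm]
  have := huc _ (by simpa using hw) _ (by simpa [hzw] using hw) hdist
  rw [Real.dist_eq, abs_lt] at this
  linarith

theorem IsNonnegSubsolution.apply_zero_mul_le_setIntegral_closedBall {f : ℂ → ℝ} {k R : ℝ}
    (hf : IsNonnegSubsolution (fun _ => k) (closedBall 0 R) f) (hk : 0 < k) (hR : 0 ≤ R)
    (hkR : k * R ^ 2 ≤ 1 / 2) :
    f 0 * (Real.pi * R ^ 2) ≤ 2 * ∫ z in closedBall 0 R, f z := by
  have hvol : volume.real (closedBall (0 : ℂ) R) = Real.pi * R ^ 2 := by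
    simp [Measure.real, Complex.volume_closedBall, hR, mul_comm]
  have happrox : ∀ η > 0, f 0 * (Real.pi * R ^ 2) ≤
      2 * ((∫ z in closedBall 0 R, f z) + η * (Real.pi * R ^ 2)) := fun η hη => by
    obtain ⟨N, _, hrad⟩ := exists_isometryMean_cyclicRotation_le_add hf.continuousOn hR hη
    have hball (i) : cyclicRotation N i ⁻¹' closedBall 0 R = closedBall 0 R := by simp
    have hmean := hf.isometryMean (L := cyclicRotation N) (fun _ _ => rfl) hball
      |>.apply_zero_mul_measureReal_le_of_nearly_radial (μ := volume) hk hkR hη.le hrad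
    rwa [isometryMean_zero, setIntegral_isometryMean
      (fun i => (cyclicRotation N i).measurePreserving) hball
      (hf.continuousOn.integrableOn_compact (isCompact_closedBall 0 R)), hvol] at hmean
  have hlim : Tendsto (fun η => 2 * ((∫ z in closedBall 0 R, f z) + η * (Real.pi * R ^ 2)))
      (𝓝[>] 0) (𝓝 (2 * ∫ z in closedBall 0 R, f z)) :=
    (Continuous.tendsto' (by fun_prop) _ _ (by simp)).mono_left nhdsWithin_le_nhds
  exact ge_of_tendsto hlim (eventually_nhdsWithin_of_forall happrox)

theorem IsNonnegSubsolution.apply_mul_le_setIntegral_closedBall {f : ℂ → ℝ} {p : ℂ} {k R : ℝ}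
    (hf : IsNonnegSubsolution (fun _ => k) (closedBall p R) f) (hk : 0 < k) (hR : 0 ≤ R)
    (hkR : k * R ^ 2 ≤ 1 / 2) :
    f p * (Real.pi * R ^ 2) ≤ 2 * ∫ z in closedBall p R, f z := by
  have hball : (p + ·) ⁻¹' closedBall p R = closedBall 0 R := by simp
  have hint : ∫ z in closedBall 0 R, f (p + z) = ∫ z in closedBall p R, f z := by
    rw [← hball]
    exact (measurePreserving_add_left volume p).setIntegral_preimage_emb
      (measurableEmbedding_addLeft p) f _
  have := (hball ▸ hf.comp_const_add p).apply_zero_mul_le_setIntegral_closedBall hk hR hkR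
  rwa [add_zero, hint] at this

end PlanarMeanValue

section Neck

variable {C lam δ M : ℝ} {p z : ℂ} {v : ℂ → ℝ}

/-- The volume density `(1 + λ / |z|²)²` of the conformal catenoid metric. -/
noncomputable def catenoidDensity (lam : ℝ) (z : ℂ) : ℝ := (1 + lam / ‖z‖ ^ 2) ^ 2

/-- The open catenoid neck `8λ < |z| < 1 / 8`. -/
def catenoidNeck (lam : ℝ) : Set ℂ := norm ⁻¹' Ioo (8 * lam) (1 / 8)

theorem measurableSet_catenoidNeck (lam : ℝ) : MeasurableSet (catenoidNeck lam) :=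
  (isOpen_Ioo.preimage continuous_norm).measurableSet

theorem catenoidDensity_nonneg (lam : ℝ) (z : ℂ) : 0 ≤ catenoidDensity lam z := sq_nonneg _

theorem isCompact_norm_preimage_Icc (a b : ℝ) : IsCompact ((norm : ℂ → ℝ) ⁻¹' Icc a b) :=
  (isCompact_closedBall (0 : ℂ) b).of_isClosed_subset (isClosed_Icc.preimage continuous_norm)
    fun _ hz => mem_closedBall_zero_iff.2 hz.2

theorem norm_mem_Icc_of_mem_closedBall (hz : z ∈ closedBall p (δ * ‖p‖)) :
    ‖z‖ ∈ Icc ((1 - δ) * ‖p‖) ((1 + δ) * ‖p‖) := by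
  rw [mem_closedBall, dist_eq_norm] at hz
  have hle := norm_sub_norm_le z p
  have hge := norm_sub_norm_le p z
  rw [norm_sub_rev] at hge
  constructor <;> linarith

theorem closedBall_subset_catenoidNeck (hlam : 0 < lam) (hδ : δ ≤ 1 / 16)
    (hp : ‖p‖ ∈ Icc (16 * lam) (1 / 16)) : closedBall p (δ * ‖p‖) ⊆ catenoidNeck lam := by
  intro z hz
  obtain ⟨hz₁, hz₂⟩ := norm_mem_Icc_of_mem_closedBall hz
  obtain ⟨hp₁, hp₂⟩ := hp
  constructor <;> nlinarith

theorem catenoidDensity_le_div_norm_sq (hlam : 0 < lam) (hδ : δ ≤ 1 / 16)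
    (hp : ‖p‖ ∈ Icc (16 * lam) (1 / 16)) (hz : z ∈ closedBall p (δ * ‖p‖)) :
    catenoidDensity lam z ≤ 1 / ‖p‖ ^ 2 := by
  obtain ⟨hp₁, hp₂⟩ := hp
  have hp₀ : 0 < ‖p‖ := by linarith
  have hzp : 15 / 16 * ‖p‖ ≤ ‖z‖ :=
    (by nlinarith : _ ≤ (1 - δ) * ‖p‖).trans (norm_mem_Icc_of_mem_closedBall hz).1
  have hratio : lam / ‖z‖ ^ 2 ≤ 15 / 16 / ‖p‖ := by
    calc lam / ‖z‖ ^ 2 ≤ (‖p‖ / 16) / (15 / 16 * ‖p‖) ^ 2 := by gcongr; linarith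
      _ = 16 / 225 / ‖p‖ := by field_simp; norm_num
      _ ≤ 15 / 16 / ‖p‖ := by gcongr ?_ / _; norm_num
  have hone : 1 ≤ 1 / 16 / ‖p‖ := by rwa [le_div_iff₀ hp₀, one_mul]
  rw [catenoidDensity, ← one_div_pow]
  gcongr
  calc 1 + lam / ‖z‖ ^ 2 ≤ 1 / 16 / ‖p‖ + 15 / 16 / ‖p‖ := add_le_add hone hratio
    _ = 1 / ‖p‖ := by ring

theorem sq_le_norm_sq_mul_catenoidDensity (hlam : 0 < lam) (hδ₀ : 0 < δ) (hδ : δ ≤ 1 / 16)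
    (hp : 0 < ‖p‖) (hends : δ ≤ ‖p‖ ∨ ‖p‖ * δ ≤ lam) (hz : z ∈ closedBall p (δ * ‖p‖)) :
    δ ^ 2 ≤ 2 * ‖p‖ ^ 2 * catenoidDensity lam z := by
  obtain ⟨hz₁, hz₂⟩ := norm_mem_Icc_of_mem_closedBall hz
  have hz₀ : 0 < ‖z‖ := lt_of_lt_of_le (by nlinarith) hz₁
  have hq : 0 < lam / ‖z‖ ^ 2 := by positivity
  rcases hends with hδp | hδp
  · have hdensity : 1 ≤ catenoidDensity lam z := one_le_pow₀ (by linarith)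
    nlinarith
  · have hratio : 3 / 4 * (δ / ‖p‖) ≤ lam / ‖z‖ ^ 2 := by
      have hzp : ‖z‖ ^ 2 ≤ 4 / 3 * ‖p‖ ^ 2 := by
        calc ‖z‖ ^ 2 ≤ ((1 + 1 / 16) * ‖p‖) ^ 2 := by
              gcongr
              exact hz₂.trans (by gcongr)
          _ ≤ 4 / 3 * ‖p‖ ^ 2 := by nlinarith
      calc 3 / 4 * (δ / ‖p‖) = ‖p‖ * δ / (4 / 3 * ‖p‖ ^ 2) := by field_simp
        _ ≤ lam / ‖z‖ ^ 2 := by gcongr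
    calc δ ^ 2 ≤ 2 * ‖p‖ ^ 2 * (3 / 4 * (δ / ‖p‖)) ^ 2 := by
          field_simp; nlinarith [sq_nonneg δ]
      _ ≤ 2 * ‖p‖ ^ 2 * catenoidDensity lam z := by
          rw [catenoidDensity]; gcongr; linarith

theorem IsNonnegSubsolution.apply_le_of_near_ends
    (hv : IsNonnegSubsolution (fun z => C * catenoidDensity lam z) (catenoidNeck lam) v)
    (hint : IntegrableOn (fun z => v z * catenoidDensity lam z) (catenoidNeck lam))
    (hC : 0 < C) (hlam : 0 < lam) (hδ₀ : 0 < δ) (hδ : δ ≤ 1 / 16) (hCδ : C * δ ^ 2 ≤ 1 / 4)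
    (hp : ‖p‖ ∈ Icc (16 * lam) (1 / 16)) (hends : δ ≤ ‖p‖ ∨ ‖p‖ * δ ≤ lam) :
    v p ≤ 4 / (Real.pi * δ ^ 4) * ∫ z in catenoidNeck lam, v z * catenoidDensity lam z := by
  have hp₀ : 0 < ‖p‖ := lt_of_lt_of_le (by positivity) hp.1
  have hsub := closedBall_subset_catenoidNeck hlam hδ hp
  have hball : IsNonnegSubsolution (fun _ => C / ‖p‖ ^ 2) (closedBall p (δ * ‖p‖)) v :=
    hv.mono hsub fun z hz => by
      rw [div_eq_mul_one_div]
      gcongr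
      exact catenoidDensity_le_div_norm_sq hlam hδ hp hz
  have hmean := hball.apply_mul_le_setIntegral_closedBall (by positivity) (by positivity)
    (by field_simp; linarith)
  have hdensity : ∫ z in closedBall p (δ * ‖p‖), δ ^ 2 * v z ≤
      ∫ z in closedBall p (δ * ‖p‖), 2 * ‖p‖ ^ 2 * (v z * catenoidDensity lam z) := by
    refine setIntegral_mono_on
      ((hball.continuousOn.integrableOn_compact (isCompact_closedBall _ _)).const_mul _)
      ((hint.mono_set hsub).const_mul _) measurableSet_closedBall fun z hz => ?_
    rw [mul_left_comm, mul_comm (δ ^ 2)]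
    exact mul_le_mul_of_nonneg_left
      (sq_le_norm_sq_mul_catenoidDensity hlam hδ₀ hδ hp₀ hends hz) (hball.nonneg z hz)
  have hmono : ∫ z in closedBall p (δ * ‖p‖), v z * catenoidDensity lam z ≤
      ∫ z in catenoidNeck lam, v z * catenoidDensity lam z :=
    setIntegral_mono_set hint (ae_restrict_of_forall_mem (measurableSet_catenoidNeck lam)
      fun z hz => mul_nonneg (hv.nonneg z hz) (catenoidDensity_nonneg lam z)) hsub.eventuallyLE
  rw [integral_const_mul, integral_const_mul] at hdensity
  rw [div_mul_eq_mul_div, le_div_iff₀ (by positivity)]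
  refine le_of_mul_le_mul_right ?_ (by positivity : 0 < ‖p‖ ^ 2)
  nlinarith [mul_le_mul_of_nonneg_left hmean (sq_nonneg δ),
    mul_le_mul_of_nonneg_left hmono (sq_nonneg ‖p‖)]

/-- `C (|z|² + λ² / |z|²)`: its Laplacian dominates the potential `C (1 + λ / |z|²)²`, and it is
small where `λ ≪ |z| ≪ 1`. It comes from applying to `|z|²` the catenoid symmetry
`|z| ↦ λ / |z|`. -/
noncomputable def neckBarrier (C lam : ℝ) (z : ℂ) : ℝ := C * (‖z‖ ^ 2 + lam ^ 2 / ‖z‖ ^ 2)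

theorem contDiffAt_neckBarrier (C lam : ℝ) (hz : z ≠ 0) : ContDiffAt ℝ 2 (neckBarrier C lam) z := by
  have hsq : ContDiffAt ℝ 2 (fun z : ℂ => ‖z‖ ^ 2) z := (contDiff_norm_sq ℝ).contDiffAt
  exact contDiffAt_const.mul (hsq.add (contDiffAt_const.div hsq (by simpa using hz)))

theorem laplacian_neckBarrier (C lam : ℝ) (hz : z ≠ 0) :
    Δ (neckBarrier C lam) z = 4 * C * (1 + (lam / ‖z‖ ^ 2) ^ 2) := by
  let g : ℝ → ℝ := fun t => C * (t + lam ^ 2 / t)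
  have ht : ‖z‖ ^ 2 ≠ 0 := by simpa using hz
  have hderiv {t : ℝ} (ht : t ≠ 0) : HasDerivAt g (C * (1 - lam ^ 2 / t ^ 2)) t := by
    convert! ((hasDerivAt_id t).add ((hasDerivAt_inv ht).const_mul (lam ^ 2))).const_mul C using 1
    field_simp
    ring
  have hderiv₂ : deriv (deriv g) (‖z‖ ^ 2) = C * (2 * lam ^ 2 / (‖z‖ ^ 2) ^ 3) := by
    have hev : deriv g =ᶠ[𝓝 (‖z‖ ^ 2)] fun t => C * (1 - lam ^ 2 / t ^ 2) :=
      (eventually_ne_nhds ht).mono fun t ht => (hderiv ht).deriv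
    rw [hev.deriv_eq, ((((hasDerivAt_const _ (lam ^ 2)).fun_div (hasDerivAt_pow 2 _)
      (pow_ne_zero 2 ht)).const_sub 1).const_mul C).deriv]
    field_simp
    simp only [Nat.cast_ofNat]
    ring
  have hg : ContDiffAt ℝ 2 g (‖z‖ ^ 2) :=
    contDiffAt_const.mul (contDiffAt_id.add (contDiffAt_const.div contDiffAt_id ht))
  rw [show neckBarrier C lam = fun z => g (‖z‖ ^ 2) from rfl, laplacian_comp_norm_sq hg, hderiv₂,
    (hderiv ht).deriv, Complex.finrank_real_complex]
  field_simp
  push_cast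
  ring

theorem mul_catenoidDensity_lt_laplacian_neckBarrier (hC : 0 < C) (hz : z ≠ 0) :
    C * catenoidDensity lam z < Δ (neckBarrier C lam) z := by
  rw [laplacian_neckBarrier C lam hz, catenoidDensity, mul_comm 4 C, mul_assoc]
  gcongr
  nlinarith [sq_nonneg (1 - lam / ‖z‖ ^ 2), sq_nonneg (lam / ‖z‖ ^ 2)]

theorem neckBarrier_le_half (hC : 0 < C) (hlam : 0 < lam) (hδ : 0 < δ) (hCδ : C * δ ^ 2 ≤ 1 / 4)
    (hz : ‖z‖ ∈ Icc (lam / δ) δ) : neckBarrier C lam z ≤ 1 / 2 := by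
  have hz₀ : 0 < ‖z‖ := lt_of_lt_of_le (by positivity) hz.1
  have hinv : lam / ‖z‖ ≤ δ := by rw [div_le_iff₀ hz₀, mul_comm]; exact (div_le_iff₀ hδ).1 hz.1
  calc neckBarrier C lam z = C * (‖z‖ ^ 2 + (lam / ‖z‖) ^ 2) := by rw [neckBarrier, div_pow]
    _ ≤ C * (δ ^ 2 + δ ^ 2) := by gcongr; exact hz.2
    _ ≤ 1 / 2 := by linarith

theorem norm_eq_or_eq_of_mem_frontier_norm_preimage_Icc {a b : ℝ}
    (hz : z ∈ frontier (norm ⁻¹' Icc a b)) (hab : a ≤ b) : ‖z‖ = a ∨ ‖z‖ = b := by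
  simpa [frontier_Icc hab] using continuous_norm.frontier_preimage_subset _ hz

theorem IsNonnegSubsolution.le_two_mul_of_le_on_circles
    (hv : IsNonnegSubsolution (fun z => C * catenoidDensity lam z) (norm ⁻¹' Icc (lam / δ) δ) v)
    (hC : 0 < C) (hlam : 0 < lam) (hδ : 0 < δ) (hCδ : C * δ ^ 2 ≤ 1 / 4) (hM : 0 ≤ M)
    (hle : ∀ z : ℂ, ‖z‖ = lam / δ ∨ ‖z‖ = δ → v z ≤ M) (hp : ‖p‖ ∈ Icc (lam / δ) δ) :
    v p ≤ 2 * M := by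
  have hne : ∀ z ∈ norm ⁻¹' Icc (lam / δ) δ, z ≠ (0 : ℂ) := fun z hz =>
    norm_pos_iff.1 (lt_of_lt_of_le (by positivity) hz.1)
  refine hv.le_two_mul_of_lt_laplacian (φ := neckBarrier C lam) (isCompact_norm_preimage_Icc _ _)
    (fun z _ => mul_nonneg hC.le (catenoidDensity_nonneg lam z))
    (fun z hz => contDiffAt_neckBarrier C lam (hne z hz))
    (fun z _ => by rw [neckBarrier]; positivity)
    (fun z hz => neckBarrier_le_half hC hlam hδ hCδ hz)
    (fun z hz => mul_catenoidDensity_lt_laplacian_neckBarrier hC (hne z hz)) hM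
    (fun z hz => hle z ?_) hp
  exact norm_eq_or_eq_of_mem_frontier_norm_preimage_Icc hz (hp.1.trans hp.2)

theorem IsNonnegSubsolution.apply_le_setIntegral_catenoidNeck
    (hv : IsNonnegSubsolution (fun z => C * catenoidDensity lam z) (catenoidNeck lam) v)
    (hint : IntegrableOn (fun z => v z * catenoidDensity lam z) (catenoidNeck lam))
    (hC : 0 < C) (hlam : 0 < lam) (hδ₀ : 0 < δ) (hδ : δ ≤ 1 / 16) (hCδ : C * δ ^ 2 ≤ 1 / 4)
    (hp : ‖p‖ ∈ Icc (16 * lam) (1 / 16)) :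
    v p ≤ 2 * (4 / (Real.pi * δ ^ 4) *
      ∫ z in catenoidNeck lam, v z * catenoidDensity lam z) := by
  set M := 4 / (Real.pi * δ ^ 4) * ∫ z in catenoidNeck lam, v z * catenoidDensity lam z
  have hM : 0 ≤ M := mul_nonneg (by positivity) <|
    setIntegral_nonneg (measurableSet_catenoidNeck lam) fun z hz =>
      mul_nonneg (hv.nonneg z hz) (catenoidDensity_nonneg lam z)
  have hends {q : ℂ} (hq : ‖q‖ ∈ Icc (16 * lam) (1 / 16)) (hδq : δ ≤ ‖q‖ ∨ ‖q‖ * δ ≤ lam) :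
      v q ≤ M := hv.apply_le_of_near_ends hint hC hlam hδ₀ hδ hCδ hq hδq
  by_cases hnear : δ ≤ ‖p‖ ∨ ‖p‖ * δ ≤ lam
  · linarith [hends hp hnear]
  push Not at hnear
  have hlamδ : 16 * lam ≤ lam / δ := by rw [le_div_iff₀ hδ₀]; nlinarith
  have hpδ : ‖p‖ ∈ Icc (lam / δ) δ := ⟨((div_lt_iff₀ hδ₀).2 hnear.2).le, hnear.1.le⟩
  have hsub : norm ⁻¹' Icc (lam / δ) δ ⊆ catenoidNeck lam := fun z hz =>
    ⟨by linarith [hz.1], by linarith [hz.2]⟩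
  refine (hv.mono hsub fun _ _ => le_rfl).le_two_mul_of_le_on_circles hC hlam hδ₀ hCδ hM
    (fun z hz => ?_) hpδ
  rcases hz with hz | hz
  · exact hends (hz ▸ ⟨hlamδ, (hpδ.1.trans hpδ.2).trans hδ⟩) (.inr (by rw [hz]; field_simp; rfl))
  · exact hends (hz ▸ ⟨hlamδ.trans (hpδ.1.trans hpδ.2), hδ⟩) (.inl hz.ge)

end Neck

section PlaneCoordinates

variable {w : ℝ × ℝ → ℝ} {r R : ℝ}

theorem euclNorm_re_im (z : ℂ) : euclNorm (z.re, z.im) = ‖z‖ := by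
  rw [euclNorm, Complex.norm_eq_sqrt_sq_add_sq]

theorem continuous_euclNorm : Continuous euclNorm := by
  unfold euclNorm
  fun_prop

theorem measurableSet_annulus (r R : ℝ) : MeasurableSet (annulus r R) :=
  (isClosed_Icc.preimage continuous_euclNorm).measurableSet

theorem isCompact_annulus (r R : ℝ) : IsCompact (annulus r R) := by
  have himage : annulus r R = Complex.equivRealProdCLM.symm ⁻¹' (norm ⁻¹' Icc r R) := by
    ext x
    simp [annulus, euclNorm, Complex.norm_eq_sqrt_sq_add_sq]
  rw [himage]
  exact Complex.equivRealProdCLM.symm.toHomeomorph.isCompact_preimage.2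
    (isCompact_norm_preimage_Icc r R)

theorem integrableOn_mul_density_annulus (hr : 0 < r) (hw : ContinuousOn w (annulus r R))
    (lam : ℝ) :
    IntegrableOn (fun y => w y * (1 + lam / euclNorm y ^ 2) ^ 2) (annulus r R) := by
  refine ContinuousOn.integrableOn_compact (isCompact_annulus r R) (hw.mul ?_)
  refine (continuousOn_const.add (continuousOn_const.div
    (continuous_euclNorm.pow 2).continuousOn fun y hy => ?_)).pow 2
  exact pow_ne_zero 2 (hr.trans_le hy.1).ne'

theorem laplacian_eq_deriv_deriv_re_add_im {f : ℂ → ℝ} {z : ℂ} (hf : ContDiffAt ℝ 2 f z) :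
    Δ f z = deriv (fun s => deriv (fun t => f ⟨t, z.im⟩) s) z.re +
      deriv (fun s => deriv (fun t => f ⟨z.re, t⟩) s) z.im := by
  have hshift (g : ℝ → ℝ) (a : ℝ) :
      deriv (deriv fun s => g (a + s)) 0 = deriv (deriv g) a := by
    rw [funext fun s => deriv_comp_const_add g a s, deriv_comp_const_add, add_zero]
  have hre (s : ℝ) : z + s • (1 : ℂ) = ⟨z.re + s, z.im⟩ := by apply Complex.ext <;> simp
  have him (s : ℝ) : z + s • Complex.I = ⟨z.re, z.im + s⟩ := by apply Complex.ext <;> simp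
  simp [laplacian_eq_sum_deriv_deriv Complex.orthonormalBasisOneI hf, Fin.sum_univ_two, hre, him,
    hshift (fun t => f ⟨t, z.im⟩), hshift (fun t => f ⟨z.re, t⟩), -Complex.real_smul]

theorem setIntegral_comp_re_im (g : ℝ × ℝ → ℝ) (s : Set (ℝ × ℝ)) :
    ∫ z in {z : ℂ | (z.re, z.im) ∈ s}, g (z.re, z.im) = ∫ x in s, g x :=
  Complex.volume_preserving_equiv_real_prod.setIntegral_preimage_emb
    Complex.measurableEquivRealProd.measurableEmbedding g s

theorem integrableOn_comp_re_im {g : ℝ × ℝ → ℝ} {s : Set (ℝ × ℝ)} (hg : IntegrableOn g s) :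
    IntegrableOn (fun z : ℂ => g (z.re, z.im)) {z : ℂ | (z.re, z.im) ∈ s} :=
  (Complex.volume_preserving_equiv_real_prod.integrableOn_comp_preimage
    Complex.measurableEquivRealProd.measurableEmbedding).2 hg

theorem isNonnegSubsolution_comp_re_im {V : ℂ → ℝ} {s : Set (ℝ × ℝ)} (hs : IsOpen s)
    (hw : ContDiffOn ℝ 2 w s) (hw₀ : ∀ x ∈ s, 0 ≤ w x)
    (hΔ : ∀ x ∈ s, -V ⟨x.1, x.2⟩ * w x ≤
      deriv (fun x₁ => deriv (fun y₁ => w (y₁, x.2)) x₁) x.1 +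
        deriv (fun x₂ => deriv (fun y₂ => w (x.1, y₂)) x₂) x.2) :
    IsNonnegSubsolution V {z | (z.re, z.im) ∈ s} fun z => w (z.re, z.im) := by
  have hC2 : ∀ z : ℂ, (z.re, z.im) ∈ s → ContDiffAt ℝ 2 (fun z : ℂ => w (z.re, z.im)) z :=
    fun z hz => (hw.contDiffAt (hs.mem_nhds hz)).comp z
      (Complex.reCLM.contDiff.prodMk Complex.imCLM.contDiff).contDiffAt
  exact ⟨hC2, fun z hz => hw₀ _ hz, fun z hz =>
    (hΔ _ hz).trans_eq (laplacian_eq_deriv_deriv_re_add_im (hC2 z hz)).symm⟩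

end PlaneCoordinates

theorem exists_pos_le_mul_sq_le {C : ℝ} (hC : 0 < C) :
    ∃ δ : ℝ, 0 < δ ∧ δ ≤ 1 / 16 ∧ C * δ ^ 2 ≤ 1 / 4 := by
  refine ⟨1 / (16 * (1 + C)), by positivity, ?_, ?_⟩
  · gcongr
    linarith
  · rw [div_pow, one_pow, mul_one_div, div_le_div_iff₀ (by positivity) (by norm_num)]
    nlinarith

theorem catenoid_mean_value_inequality_general {C₁ : ℝ} (hC₁ : 0 < C₁) :
    ∃ C₂ : ℝ, 0 < C₂ ∧ ∀ lam : ℝ, 0 < lam → ∀ w : ℝ × ℝ → ℝ,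
      ContDiffOn ℝ 2 w (euclNorm ⁻¹' Ioo (8 * lam) (1 / 8)) →
      IntegrableOn (fun y => w y * (1 + lam / euclNorm y ^ 2) ^ 2)
        (euclNorm ⁻¹' Ioo (8 * lam) (1 / 8)) →
      (∀ x ∈ euclNorm ⁻¹' Ioo (8 * lam) (1 / 8), 0 ≤ w x) →
      (∀ x ∈ euclNorm ⁻¹' Ioo (8 * lam) (1 / 8),
        -C₁ * (1 + lam / euclNorm x ^ 2) ^ 2 * w x ≤
          deriv (fun x₁ => deriv (fun y₁ => w (y₁, x.2)) x₁) x.1 +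
            deriv (fun x₂ => deriv (fun y₂ => w (x.1, y₂)) x₂) x.2) →
      ∀ x ∈ annulus (16 * lam) (1 / 16),
        w x ≤ C₂ * ∫ y in euclNorm ⁻¹' Ioo (8 * lam) (1 / 8),
          w y * (1 + lam / euclNorm y ^ 2) ^ 2 := by
  obtain ⟨δ, hδ₀, hδ, hCδ⟩ := exists_pos_le_mul_sq_le hC₁
  refine ⟨2 * (4 / (Real.pi * δ ^ 4)), by positivity, fun lam hlam w hw hint hw₀ hΔ x hx => ?_⟩
  have hneck : {z : ℂ | (z.re, z.im) ∈ euclNorm ⁻¹' Ioo (8 * lam) (1 / 8)} = catenoidNeck lam := by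
    ext z
    simp [catenoidNeck, euclNorm_re_im]
  have hdensity (z : ℂ) : (1 + lam / euclNorm (z.re, z.im) ^ 2) ^ 2 = catenoidDensity lam z := by
    rw [euclNorm_re_im, catenoidDensity]
  have hv := isNonnegSubsolution_comp_re_im (V := fun z => C₁ * catenoidDensity lam z)
    (isOpen_Ioo.preimage continuous_euclNorm) hw hw₀
    fun x hx => by simpa [← hdensity] using hΔ x hx
  have hintv := integrableOn_comp_re_im hint
  simp only [hneck, hdensity] at hv hintv
  have hp : ‖(⟨x.1, x.2⟩ : ℂ)‖ ∈ Icc (16 * lam) (1 / 16) := by rwa [← euclNorm_re_im]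
  rw [← setIntegral_comp_re_im, hneck, mul_assoc]
  simp only [hdensity]
  exact hv.apply_le_setIntegral_catenoidNeck hintv hC₁ hlam hδ₀ hδ hCδ hp

/-- Mean value inequality on the catenoid neck (Lemma 5.2), uniform in `λ`: for every
`C₁ > 0` there are `λ₀, C₂ > 0` such that for all `λ ∈ (0, λ₀)`, any nonnegative `C²`
function `w` on the annulus `8λ ≤ |x| ≤ 1/8` with `Δw ≥ -C₁ (1 + λ/|x|²)² w` satisfies
`sup_{16λ ≤ |x| ≤ 1/16} w ≤ C₂ ∫_{8λ ≤ |x| ≤ 1/8} w (1 + λ/|x|²)² dx`. -/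
theorem catenoid_mean_value_inequality :
    ∀ C₁ : ℝ, 0 < C₁ →
    ∃ lam₀ C₂ : ℝ, 0 < lam₀ ∧ 0 < C₂ ∧
      ∀ lam : ℝ, 0 < lam → lam < lam₀ →
      ∀ w : ℝ × ℝ → ℝ,
        ContDiffOn ℝ 2 w (annulus (8 * lam) (1 / 8)) →
        (∀ x ∈ annulus (8 * lam) (1 / 8), 0 ≤ w x) →
        (∀ x ∈ annulus (8 * lam) (1 / 8),
          -C₁ * (1 + lam / euclNorm x ^ 2) ^ 2 * w x ≤
            deriv (fun x₁ => deriv (fun y₁ => w (y₁, x.2)) x₁) x.1 +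
              deriv (fun x₂ => deriv (fun y₂ => w (x.1, y₂)) x₂) x.2) →
        ∀ x ∈ annulus (16 * lam) (1 / 16),
          w x ≤ C₂ * ∫ y in annulus (8 * lam) (1 / 8),
            w y * (1 + lam / euclNorm y ^ 2) ^ 2 := by
  intro C₁ hC₁
  obtain ⟨C₂, hC₂, hmain⟩ := catenoid_mean_value_inequality_general hC₁
  refine ⟨1, C₂, one_pos, hC₂, fun lam hlam _ w hw hw₀ hΔ x hx => ?_⟩
  have hsub : euclNorm ⁻¹' Ioo (8 * lam) (1 / 8) ⊆ annulus (8 * lam) (1 / 8) :=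
    preimage_mono Ioo_subset_Icc_self
  have hint := integrableOn_mul_density_annulus (by positivity) hw.continuousOn lam
  refine (hmain lam hlam w (hw.mono hsub) (hint.mono_set hsub) (fun y hy => hw₀ y (hsub hy))
    (fun y hy => hΔ y (hsub hy)) x hx).trans (mul_le_mul_of_nonneg_left ?_ hC₂.le)
  exact setIntegral_mono_set hint (ae_restrict_of_forall_mem (measurableSet_annulus _ _)
    fun y hy => mul_nonneg (hw₀ y hy) (sq_nonneg _)) hsub.eventuallyLE
end
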